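/- Let n ≥ 2, let Ω, Ω̃ ⊆ ℝⁿ be bounded, uniformly convex open domains with smooth boundary, with the closure of Ω̃ contained in the open unit ball B₁(0). Then there exists a constant C₃₆ > 0, depending only on Ω and Ω̃, such that for every strictly convex solution (u, c) of the second boundary value problem for the Lorentz mean curvature operator on (Ω, Ω̃), the Legendre transform ũ of u satisfies max over the closure of Ω̃ of ‖D²ũ(y)‖ ≤ C₃₆, where ‖·‖ is the operator norm. -/

import Mathlib

noncomputable section
open MeasureTheory
open scoped RealInnerProductSpace

/-- The `i`-th standard basis vector of `ℝⁿ`. -/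
def ev (n : ℕ) (i : Fin n) : EuclideanSpace ℝ (Fin n) := EuclideanSpace.single i 1

/-- Lorentz mean curvature operator `M[u] x = ∑ i, ∂ᵢ (∂ᵢ u / √(1 - |∇u|²)) x`. -/
def MOp (n : ℕ) (u : EuclideanSpace ℝ (Fin n) → ℝ) (x : EuclideanSpace ℝ (Fin n)) : ℝ :=
  ∑ i : Fin n,
    fderiv ℝ (fun y => fderiv ℝ u y (ev n i) / Real.sqrt (1 - ‖gradient u y‖ ^ 2)) x (ev n i)

/-- Euclidean mean curvature operator `E[u] x = ∑ i, ∂ᵢ (∂ᵢ u / √(1 + |∇u|²)) x`. -/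
def EOp (n : ℕ) (u : EuclideanSpace ℝ (Fin n) → ℝ) (x : EuclideanSpace ℝ (Fin n)) : ℝ :=
  ∑ i : Fin n,
    fderiv ℝ (fun y => fderiv ℝ u y (ev n i) / Real.sqrt (1 + ‖gradient u y‖ ^ 2)) x (ev n i)

/-- `Ω` is a uniformly convex domain with smooth boundary, exhibited by the defining
function `h` with uniform concavity constant `θ`:  `h` is smooth, `Ω = {h > 0}`,
`|∇h| = 1` on `∂Ω`, and `⟨ξ, D²h(p) ξ⟩ ≤ -θ |ξ|²` for all `p, ξ`. -/
def IsUnifConvexDefFn (n : ℕ) (Ω : Set (EuclideanSpace ℝ (Fin n)))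
    (h : EuclideanSpace ℝ (Fin n) → ℝ) (θ : ℝ) : Prop :=
  ContDiff ℝ (⊤ : ℕ∞) h ∧ Ω = {p | 0 < h p} ∧
  (∀ p ∈ frontier Ω, ‖gradient h p‖ = 1) ∧ 0 < θ ∧
  ∀ p ξ : EuclideanSpace ℝ (Fin n), ⟪ξ, fderiv ℝ (gradient h) p ξ⟫ ≤ -θ * ‖ξ‖ ^ 2

/-- `u` is smooth on the closure of `Ω` (i.e. on an open neighbourhood of it). -/
def SmoothOnClosure (n : ℕ) (Ω : Set (EuclideanSpace ℝ (Fin n)))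
    (u : EuclideanSpace ℝ (Fin n) → ℝ) : Prop :=
  ∃ U : Set (EuclideanSpace ℝ (Fin n)), IsOpen U ∧ closure Ω ⊆ U ∧ ContDiffOn ℝ (⊤ : ℕ∞) u U

/-- `(u, c)` is a strictly convex solution of the second boundary value problem for the
Lorentz mean curvature operator on `(Ω, Ω')`: `u` is smooth up to the boundary, spacelike
(`|∇u| < 1`), has positive definite Hessian `D²u` on the closure of `Ω`, its gradient map
is a bijection from `Ω` onto `Ω'`, and `M[u] = c` on `Ω`. -/
def IsSol (n : ℕ) (Ω Ω' : Set (EuclideanSpace ℝ (Fin n)))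
    (u : EuclideanSpace ℝ (Fin n) → ℝ) (c : ℝ) : Prop :=
  SmoothOnClosure n Ω u ∧
  (∀ x ∈ closure Ω, ‖gradient u x‖ < 1) ∧
  (∀ x ∈ closure Ω, ∀ ξ : EuclideanSpace ℝ (Fin n), ξ ≠ 0 →
      0 < ⟪ξ, fderiv ℝ (gradient u) x ξ⟫) ∧
  Set.BijOn (gradient u) Ω Ω' ∧
  (∀ x ∈ Ω, MOp n u x = c)

/-- `(u, c)` is a strictly convex solution of the second boundary value problem for the
Euclidean mean curvature operator on `(Ω, Ω')`. -/
def IsSolE (n : ℕ) (Ω Ω' : Set (EuclideanSpace ℝ (Fin n)))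
    (u : EuclideanSpace ℝ (Fin n) → ℝ) (c : ℝ) : Prop :=
  SmoothOnClosure n Ω u ∧
  (∀ x ∈ closure Ω, ∀ ξ : EuclideanSpace ℝ (Fin n), ξ ≠ 0 →
      0 < ⟪ξ, fderiv ℝ (gradient u) x ξ⟫) ∧
  Set.BijOn (gradient u) Ω Ω' ∧
  (∀ x ∈ Ω, EOp n u x = c)

/-- `ut` is the Legendre transform of `u`: it is smooth up to the boundary of `Ω'`,
satisfies `ut (∇u x) = ⟨x, ∇u x⟩ - u x` and `∇ut (∇u x) = x` for `x ∈ Ω`. -/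
def IsLegendre (n : ℕ) (Ω Ω' : Set (EuclideanSpace ℝ (Fin n)))
    (u ut : EuclideanSpace ℝ (Fin n) → ℝ) : Prop :=
  SmoothOnClosure n Ω' ut ∧
  (∀ x ∈ Ω, ut (gradient u x) = ⟪x, gradient u x⟫ - u x) ∧
  (∀ x ∈ Ω, gradient ut (gradient u x) = x)

/-- The coefficient matrix `s_ij(p) = (δ_ij + pᵢpⱼ/(1 - |p|²)) / √(1 - |p|²)` of the
Lorentz mean curvature operator written in nondivergence form. -/
def sMat (n : ℕ) (p : EuclideanSpace ℝ (Fin n)) (i j : Fin n) : ℝ :=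
  ((if i = j then (1 : ℝ) else 0) + p i * p j / (1 - ‖p‖ ^ 2)) / Real.sqrt (1 - ‖p‖ ^ 2)

/-- `Ω` has smooth boundary: it is the superlevel set of a smooth function whose
gradient does not vanish on the boundary. -/
def HasSmoothBoundary (n : ℕ) (Ω : Set (EuclideanSpace ℝ (Fin n))) : Prop :=
  ∃ g : EuclideanSpace ℝ (Fin n) → ℝ, ContDiff ℝ (⊤ : ℕ∞) g ∧ Ω = {p | 0 < g p} ∧
    ∀ p ∈ frontier Ω, gradient g p ≠ 0

/-- `B(p) = Iₙ + p pᵀ / (v (1 + v))`, `v = √(1 - |p|²)`: the positive square root of the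
inverse induced metric of a spacelike graph with gradient `p`. -/
def sqB (n : ℕ) (p : EuclideanSpace ℝ (Fin n)) : Matrix (Fin n) (Fin n) ℝ :=
  1 + (Real.sqrt (1 - ‖p‖ ^ 2) * (1 + Real.sqrt (1 - ‖p‖ ^ 2)))⁻¹ •
      Matrix.of fun i j => p i * p j

/-- `B'(p) = Iₙ - p pᵀ / (1 + v)`, `v = √(1 - |p|²)`: the square root of the induced
metric of a spacelike graph with gradient `p`. -/
def sqBinv (n : ℕ) (p : EuclideanSpace ℝ (Fin n)) : Matrix (Fin n) (Fin n) ℝ :=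
  1 - (1 + Real.sqrt (1 - ‖p‖ ^ 2))⁻¹ • Matrix.of fun i j => p i * p j

/-!
Let `X = ∇ũ` and `A = D²ũ`. With vector fields `rᵢ` whose squares sum to the coefficient matrix of
the equation and `wᵢ = A⁻¹ rᵢ`, the equation reads `∑ᵢ ⟪rᵢ, wᵢ⟫ = c`, and its linearization is
`L f = ∑ᵢ D²f(wᵢ, wᵢ)`. Touching `u` and `ũ` by paraboloids bounds `c` above and away from zero,
hence `|wᵢ| ≤ C` and `∑ᵢ |wᵢ|² ≥ δ`; so a defining function `h` of the target domain is a barrier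
for `L`, the boundary condition `g ∘ X = 0` is uniformly oblique, and `L ⟪ξ, A ξ⟫` is bounded below
up to a multiple of `L h`. This reduces the bound on `A` to boundary points and then, by
obliqueness, to tangential directions.

Let `M` be the maximum of `⟪τ, A τ⟫` over unit tangent vectors, attained at `(y, τ)`, and let `β` be
the oblique direction. The barrier bounds the `β`-derivative of `⟪τ, A τ⟫` at `y` linearly in `M`,
while differentiating `g ∘ X ≥ 0` twice along a parabola in the domain tangent to `τ` at `y` bounds
`θ |A τ|²` by that derivative plus a multiple of `1 + M`. Since `M ≤ |A τ|`, this gives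
`θ M² ≤ C (1 + M)`.
-/

open Filter Topology Set
open scoped ContDiff

lemma exists_norm_le_of_continuousOn {E V : Type*} [TopologicalSpace E] [SeminormedAddGroup V]
    {F : E → V} {s : Set E} (hs : IsCompact s) (hF : ContinuousOn F s) :
    ∃ C, 0 ≤ C ∧ ∀ y ∈ s, ‖F y‖ ≤ C := by
  obtain ⟨C, hC⟩ := hs.exists_bound_of_continuousOn hF
  exact ⟨max C 0, le_max_right _ _, fun y hy => (hC y hy).trans (le_max_left _ _)⟩

section Lines

variable {E V : Type*} [NormedAddCommGroup E] [NormedSpace ℝ E]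
  [NormedAddCommGroup V] [NormedSpace ℝ V] {U : Set E} {F G : E → V} {y : E}

lemma tendsto_add_smul_zero (y a : E) : Tendsto (fun t : ℝ => y + t • a) (𝓝 0) (𝓝 y) := by
  have h : ContinuousAt (fun t : ℝ => y + t • a) 0 := by fun_prop
  simpa [ContinuousAt] using h

lemma hasDerivAt_add_smul (y a : E) (t : ℝ) : HasDerivAt (fun t : ℝ => y + t • a) a t := by
  simpa using ((hasDerivAt_id t).smul_const a).const_add y

lemma differentiableAt_of_contDiffOn_isOpen (hU : IsOpen U) (hF : ContDiffOn ℝ ∞ F U)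
    (hy : y ∈ U) : DifferentiableAt ℝ F y :=
  (hF.differentiableOn (by simp)).differentiableAt (hU.mem_nhds hy)

lemma contDiffOn_fderiv (hU : IsOpen U) (hF : ContDiffOn ℝ ∞ F U) :
    ContDiffOn ℝ ∞ (fderiv ℝ F) U :=
  hF.fderiv_of_isOpen hU (by simp)

lemma eventually_hasDerivAt_comp_line (hU : IsOpen U) (hF : ContDiffOn ℝ ∞ F U) (hy : y ∈ U)
    (a : E) :
    ∀ᶠ t in 𝓝 (0 : ℝ),
      HasDerivAt (fun t : ℝ => F (y + t • a)) (fderiv ℝ F (y + t • a) a) t := by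
  filter_upwards [(tendsto_add_smul_zero y a).eventually (hU.mem_nhds hy)] with t ht
  exact (differentiableAt_of_contDiffOn_isOpen hU hF ht).hasFDerivAt.comp_hasDerivAt t
    (hasDerivAt_add_smul y a t)

lemma hasDerivAt_comp_line (hU : IsOpen U) (hF : ContDiffOn ℝ ∞ F U) (hy : y ∈ U) (a : E) :
    HasDerivAt (fun t : ℝ => F (y + t • a)) (fderiv ℝ F y a) 0 :=
  (differentiableAt_of_contDiffOn_isOpen hU hF hy).hasFDerivAt.hasLineDerivAt a

lemma hasDerivAt_fderiv_comp_line (hU : IsOpen U) (hF : ContDiffOn ℝ ∞ F U) (hy : y ∈ U)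
    (a b : E) :
    HasDerivAt (fun t : ℝ => fderiv ℝ F (y + t • a) b) (fderiv ℝ (fderiv ℝ F) y a b) 0 := by
  simpa using (hasDerivAt_comp_line hU (contDiffOn_fderiv hU hF) hy a).clm_apply
    (hasDerivAt_const 0 b)

lemma fderiv_fderiv_apply_comm (hU : IsOpen U) (hF : ContDiffOn ℝ ∞ F U) (hy : y ∈ U) (a b : E) :
    fderiv ℝ (fderiv ℝ F) y a b = fderiv ℝ (fderiv ℝ F) y b a := by
  refine ((hF.contDiffAt (hU.mem_nhds hy)).isSymmSndFDerivAt ?_) a b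
  rw [minSmoothness_of_isRCLikeNormedField]
  exact WithTop.coe_le_coe.2 (le_top : (2 : ℕ∞) ≤ ⊤)

lemma hasDerivAt_line_unique {a : E} {F' G' : V} (hU : IsOpen U) (hy : y ∈ U) (hFG : EqOn F G U)
    (hF : HasDerivAt (fun t : ℝ => F (y + t • a)) F' 0)
    (hG : HasDerivAt (fun t : ℝ => G (y + t • a)) G' 0) : F' = G' := by
  refine hF.unique (hG.congr_of_eventuallyEq ?_)
  filter_upwards [(tendsto_add_smul_zero y a).eventually (hU.mem_nhds hy)] with t ht
  exact hFG ht

lemma fderiv_apply_eq_of_hasDerivAt_line {a : E} {d : V} (hF : DifferentiableAt ℝ F y)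
    (hd : HasDerivAt (fun t : ℝ => F (y + t • a)) d 0) : fderiv ℝ F y a = d :=
  (hF.hasFDerivAt.hasLineDerivAt a).unique hd

lemma fderiv_fderiv_apply_eq_of_hasDerivAt_line {a : E} {F' : ℝ → V} {q : V} (hU : IsOpen U)
    (hF : ContDiffOn ℝ ∞ F U) (hy : y ∈ U)
    (hF' : ∀ᶠ t in 𝓝 (0 : ℝ), HasDerivAt (fun t : ℝ => F (y + t • a)) (F' t) t)
    (hq : HasDerivAt F' q 0) : fderiv ℝ (fderiv ℝ F) y a a = q := by
  refine (hasDerivAt_fderiv_comp_line hU hF hy a a).unique (hq.congr_of_eventuallyEq ?_)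
  filter_upwards [eventually_hasDerivAt_comp_line hU hF hy a, hF'] with t h₁ h₂
  exact h₁.unique h₂

lemma exists_norm_jet_le {s : Set E} (hs : IsCompact s) (hU : IsOpen U) (hsU : s ⊆ U)
    (hF : ContDiffOn ℝ ∞ F U) :
    ∃ C, 0 ≤ C ∧ ∀ y ∈ s,
      ‖F y‖ ≤ C ∧ ‖fderiv ℝ F y‖ ≤ C ∧ ‖fderiv ℝ (fderiv ℝ F) y‖ ≤ C := by
  have hF₁ := contDiffOn_fderiv hU hF
  obtain ⟨C₀, hC₀, h₀⟩ := exists_norm_le_of_continuousOn hs (hF.continuousOn.mono hsU)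
  obtain ⟨C₁, hC₁, h₁⟩ := exists_norm_le_of_continuousOn hs (hF₁.continuousOn.mono hsU)
  obtain ⟨C₂, hC₂, h₂⟩ :=
    exists_norm_le_of_continuousOn hs ((contDiffOn_fderiv hU hF₁).continuousOn.mono hsU)
  refine ⟨C₀ + C₁ + C₂, by positivity, fun y hy => ⟨?_, ?_, ?_⟩⟩
  · linarith [h₀ y hy]
  · linarith [h₁ y hy]
  · linarith [h₂ y hy]

end Lines

section Extrema

variable {E : Type*} [NormedAddCommGroup E] [NormedSpace ℝ E] {U : Set E} {F : E → ℝ} {y : E}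

lemma eventually_nhdsGT_lt_of_hasDerivAt_pos {q : ℝ → ℝ} {d : ℝ} (hq : HasDerivAt q d 0)
    (hd : 0 < d) : ∀ᶠ t in 𝓝[>] (0 : ℝ), q 0 < q t := by
  have hslope := (hasDerivAt_iff_tendsto_slope.1 hq).eventually (lt_mem_nhds hd)
  have hle : 𝓝[>] (0 : ℝ) ≤ 𝓝[≠] 0 := nhdsWithin_mono _ fun _ hx => ne_of_gt hx
  filter_upwards [hslope.filter_mono hle, self_mem_nhdsWithin] with t ht (ht₀ : 0 < t)
  rw [slope_def_field, sub_zero] at ht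
  exact sub_pos.1 ((div_pos_iff_of_pos_right ht₀).1 ht)

/- Subtracting a quarter of the second-order term leaves a function to which the weak second
derivative test still applies, which makes the minimum strict. -/
lemma eventually_lt_of_hasDerivAt_hasDerivAt_pos {q q' : ℝ → ℝ} {q₂ : ℝ}
    (hq : ∀ᶠ t in 𝓝 (0 : ℝ), HasDerivAt q (q' t) t) (hq' : HasDerivAt q' q₂ 0) (h₀ : q' 0 = 0)
    (hpos : 0 < q₂) : ∀ᶠ t in 𝓝[≠] (0 : ℝ), q 0 < q t := by
  have hderiv : deriv (fun t => q t - q₂ / 4 * t ^ 2) =ᶠ[𝓝 0] fun t => q' t - q₂ / 2 * t := by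
    filter_upwards [hq] with t ht
    have := ht.fun_sub ((hasDerivAt_pow 2 t).const_mul (q₂ / 4))
    exact this.deriv.trans (by push_cast; ring)
  have hderiv₂ : deriv (deriv fun t => q t - q₂ / 4 * t ^ 2) 0 = q₂ - q₂ / 2 := by
    rw [hderiv.deriv_eq]
    simpa using (hq'.fun_sub ((hasDerivAt_id' (0 : ℝ)).const_mul (q₂ / 2))).deriv
  have hmin : IsLocalMin (fun t => q t - q₂ / 4 * t ^ 2) 0 := by
    apply isLocalMin_of_deriv_deriv_pos
    · rw [hderiv₂]; linarith
    · rw [hderiv.eq_of_nhds]; simp [h₀]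
    · exact hq.self_of_nhds.continuousAt.sub (by fun_prop)
  filter_upwards [hmin.filter_mono nhdsWithin_le_nhds, self_mem_nhdsWithin]
    with t ht (ht₀ : t ≠ 0)
  have : 0 < q₂ / 4 * t ^ 2 := by positivity
  simp only [ne_eq, OfNat.ofNat_ne_zero, not_false_eq_true, zero_pow, mul_zero, sub_zero] at ht
  linarith

lemma fderiv_fderiv_nonpos_of_isLocalMax (hU : IsOpen U) (hF : ContDiffOn ℝ ∞ F U) (hy : y ∈ U)
    (hmax : IsLocalMax F y) (a : E) : fderiv ℝ (fderiv ℝ F) y a a ≤ 0 := by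
  by_contra! hpos
  have hlt := eventually_lt_of_hasDerivAt_hasDerivAt_pos
    (eventually_hasDerivAt_comp_line hU hF hy a) (hasDerivAt_fderiv_comp_line hU hF hy a a)
    (by simp [hmax.fderiv_eq_zero]) hpos
  have hle := ((tendsto_add_smul_zero y a).eventually hmax).filter_mono
    (nhdsWithin_le_nhds (s := {0}ᶜ))
  obtain ⟨t, h₁, h₂⟩ := (hlt.and hle).exists
  simp only [zero_smul, add_zero] at h₁
  exact h₁.not_ge h₂

lemma hasDerivAt_parabola (y a b : E) (t : ℝ) :
    HasDerivAt (fun t : ℝ => y + (t • a + t ^ 2 • b)) (a + (2 * t) • b) t := by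
  simpa using (((hasDerivAt_id t).smul_const a).add ((hasDerivAt_pow 2 t).smul_const b)).const_add y

lemma eventually_lt_comp_parabola (hU : IsOpen U) (hF : ContDiffOn ℝ ∞ F U) (hy : y ∈ U) {a b : E}
    (ha : fderiv ℝ F y a = 0) (hpos : 0 < fderiv ℝ (fderiv ℝ F) y a a + 2 * fderiv ℝ F y b) :
    ∀ᶠ t in 𝓝[≠] (0 : ℝ), F y < F (y + (t • a + t ^ 2 • b)) := by
  have htendsto : Tendsto (fun t : ℝ => y + (t • a + t ^ 2 • b)) (𝓝 0) (𝓝 y) := by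
    simpa [ContinuousAt] using (hasDerivAt_parabola y a b 0).continuousAt
  have hfst : ∀ᶠ t in 𝓝 (0 : ℝ), HasDerivAt (fun t : ℝ => F (y + (t • a + t ^ 2 • b)))
      (fderiv ℝ F (y + (t • a + t ^ 2 • b)) (a + (2 * t) • b)) t := by
    filter_upwards [htendsto.eventually (hU.mem_nhds hy)] with t ht
    exact (differentiableAt_of_contDiffOn_isOpen hU hF ht).hasFDerivAt.comp_hasDerivAt t
      (hasDerivAt_parabola y a b t)
  have hsnd : HasDerivAt (fun t : ℝ => fderiv ℝ F (y + (t • a + t ^ 2 • b)) (a + (2 * t) • b))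
      (fderiv ℝ (fderiv ℝ F) y a a + 2 * fderiv ℝ F y b) 0 := by
    have hD : DifferentiableAt ℝ (fderiv ℝ F) (y + ((0 : ℝ) • a + (0 : ℝ) ^ 2 • b)) := by
      simpa using differentiableAt_of_contDiffOn_isOpen hU (contDiffOn_fderiv hU hF) hy
    have hv : HasDerivAt (fun t : ℝ => a + (2 * t) • b) ((2 : ℝ) • b) 0 := by
      simpa using (((hasDerivAt_id (0 : ℝ)).const_mul 2).smul_const b).const_add a
    have hD' := hD.hasFDerivAt.comp_hasDerivAt (0 : ℝ) (hasDerivAt_parabola y a b 0)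
    simpa using hD'.clm_apply hv
  simpa using eventually_lt_of_hasDerivAt_hasDerivAt_pos hfst hsnd (by simpa using ha) hpos

end Extrema

section Gradient

variable {E : Type*} [NormedAddCommGroup E] [InnerProductSpace ℝ E] [CompleteSpace E]
  {U : Set E} {f : E → ℝ} {y : E}

lemma contDiffOn_gradient (hU : IsOpen U) (hf : ContDiffOn ℝ ∞ f U) :
    ContDiffOn ℝ ∞ (gradient f) U :=
  (InnerProductSpace.toDual ℝ E).symm.contDiff.comp_contDiffOn (contDiffOn_fderiv hU hf)

lemma contDiff_gradient (hf : ContDiff ℝ ∞ f) : ContDiff ℝ ∞ (gradient f) :=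
  contDiffOn_univ.1 (contDiffOn_gradient isOpen_univ hf.contDiffOn)

lemma inner_fderiv_gradient (hU : IsOpen U) (hf : ContDiffOn ℝ ∞ f U) (hy : y ∈ U) (a b : E) :
    ⟪fderiv ℝ (gradient f) y a, b⟫ = fderiv ℝ (fderiv ℝ f) y a b := by
  have hgrad := (hasDerivAt_comp_line hU (contDiffOn_gradient hU hf) hy a).inner ℝ
    (hasDerivAt_const 0 b)
  simpa using hasDerivAt_line_unique (F := fun x => ⟪gradient f x, b⟫)
    (G := fun x => fderiv ℝ f x b) hU hy (fun _ _ => inner_gradient_left) hgrad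
    (hasDerivAt_fderiv_comp_line hU hf hy a b)

lemma inner_fderiv_gradient_comm (hU : IsOpen U) (hf : ContDiffOn ℝ ∞ f U) (hy : y ∈ U)
    (a b : E) : ⟪fderiv ℝ (gradient f) y a, b⟫ = ⟪a, fderiv ℝ (gradient f) y b⟫ := by
  rw [real_inner_comm (fderiv ℝ (gradient f) y b) a, inner_fderiv_gradient hU hf hy,
    inner_fderiv_gradient hU hf hy, fderiv_fderiv_apply_comm hU hf hy]

end Gradient

section DefiningFunction

variable {E : Type*} [NormedAddCommGroup E] [InnerProductSpace ℝ E] [CompleteSpace E]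

/-- `h` is a uniformly concave defining function of `D`, with concavity constant `θ`: the
coordinate-free form of `IsUnifConvexDefFn`. -/
structure IsUniformlyConcaveDefFn (D : Set E) (h : E → ℝ) (θ : ℝ) : Prop where
  contDiff : ContDiff ℝ ∞ h
  eq_setOf_pos : D = {p | 0 < h p}
  norm_gradient : ∀ p ∈ frontier D, ‖gradient h p‖ = 1
  pos : 0 < θ
  concave : ∀ p ξ : E, ⟪ξ, fderiv ℝ (gradient h) p ξ⟫ ≤ -θ * ‖ξ‖ ^ 2

namespace IsUniformlyConcaveDefFn

variable {D : Set E} {h : E → ℝ} {θ : ℝ} {y : E}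

lemma mem_iff (H : IsUniformlyConcaveDefFn D h θ) : y ∈ D ↔ 0 < h y := by
  rw [H.eq_setOf_pos, mem_ofPred_eq]

lemma isOpen (H : IsUniformlyConcaveDefFn D h θ) : IsOpen D := by
  rw [H.eq_setOf_pos]
  exact isOpen_lt continuous_const H.contDiff.continuous

lemma differentiable (H : IsUniformlyConcaveDefFn D h θ) : Differentiable ℝ h :=
  H.contDiff.differentiable (by simp)

lemma nonneg_of_mem_closure (H : IsUniformlyConcaveDefFn D h θ) (hy : y ∈ closure D) :
    0 ≤ h y := by
  rw [H.eq_setOf_pos] at hy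
  exact closure_lt_subset_le continuous_const H.contDiff.continuous hy

lemma eq_zero_of_mem_frontier (H : IsUniformlyConcaveDefFn D h θ) (hy : y ∈ frontier D) :
    h y = 0 := by
  rw [H.eq_setOf_pos] at hy
  exact (frontier_lt_subset_eq continuous_const H.contDiff.continuous hy).symm

lemma inner_gradient_self (H : IsUniformlyConcaveDefFn D h θ) (hy : y ∈ frontier D) :
    ⟪gradient h y, gradient h y⟫ = 1 := by
  rw [real_inner_self_eq_norm_sq, H.norm_gradient y hy, one_pow]

lemma fderiv_fderiv_le (H : IsUniformlyConcaveDefFn D h θ) (y a : E) :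
    fderiv ℝ (fderiv ℝ h) y a a ≤ -θ * ‖a‖ ^ 2 := by
  rw [← inner_fderiv_gradient isOpen_univ H.contDiff.contDiffOn (mem_univ y), real_inner_comm]
  exact H.concave y a

lemma fderiv_apply_nonpos (H : IsUniformlyConcaveDefFn D h θ) {F : E → ℝ} {b : E}
    (hy : y ∈ frontier D) (hF : DifferentiableAt ℝ F y) (hmax : IsMaxOn F (closure D) y)
    (hb : 0 < ⟪gradient h y, b⟫) : fderiv ℝ F y b ≤ 0 := by
  by_contra! hpos
  have hh := eventually_nhdsGT_lt_of_hasDerivAt_pos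
    (hasDerivAt_comp_line isOpen_univ H.contDiff.contDiffOn (mem_univ y) b)
    (by rwa [← inner_gradient_left])
  have hF' := eventually_nhdsGT_lt_of_hasDerivAt_pos (hF.hasFDerivAt.hasLineDerivAt b) hpos
  obtain ⟨t, ht, hFt⟩ := (hh.and hF').exists
  simp only [zero_smul, add_zero] at ht hFt
  rw [H.eq_zero_of_mem_frontier hy] at ht
  exact hFt.not_ge (hmax (subset_closure (H.mem_iff.2 ht)))

lemma exists_fderiv_eq_neg_mul (H : IsUniformlyConcaveDefFn D h θ) {F : E → ℝ}
    (hy : y ∈ frontier D) (hF : DifferentiableAt ℝ F y) (hmax : IsMaxOn F (closure D) y) :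
    ∃ t : ℝ, 0 ≤ t ∧ ∀ a, fderiv ℝ F y a = -t * ⟪gradient h y, a⟫ := by
  set ν := gradient h y
  have hν : ⟪ν, ν⟫ = 1 := H.inner_gradient_self hy
  have htangent : ∀ a, ⟪ν, a⟫ = 0 → fderiv ℝ F y a ≤ 0 := by
    intro a ha
    by_contra! hpos
    obtain ⟨ε, hε, hlt⟩ := exists_pos_mul_lt hpos (-fderiv ℝ F y ν)
    have := H.fderiv_apply_nonpos hy hF hmax (b := a + ε • ν)
      (by rwa [inner_add_right, ha, inner_smul_right, hν, zero_add, mul_one])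
    rw [map_add, map_smul, smul_eq_mul] at this
    linarith
  refine ⟨-fderiv ℝ F y ν, ?_, fun a => ?_⟩
  · exact neg_nonneg.2 (H.fderiv_apply_nonpos hy hF hmax (hν.symm ▸ one_pos))
  · have hb : ⟪ν, a - ⟪ν, a⟫ • ν⟫ = 0 := by
      rw [inner_sub_right, inner_smul_right, hν, mul_one, sub_self]
    have hle := htangent _ hb
    have hge := htangent (-(a - ⟪ν, a⟫ • ν)) (by rw [inner_neg_right, hb, neg_zero])
    rw [map_neg] at hge
    rw [map_sub, map_smul, smul_eq_mul] at hle hge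
    linarith

/- Moving along `t ↦ y + t a + t² (κ/2) ∇h(y)` with `κ` slightly larger than `-D²h(a, a)` stays in
`D`, and to second order `F` changes by `t² (D²F(a, a) + κ μ) / 2`. -/
lemma lagrange_second_order (H : IsUniformlyConcaveDefFn D h θ) {U : Set E} {F : E → ℝ} {μ : ℝ}
    {a : E} (hU : IsOpen U) (hF : ContDiffOn ℝ ∞ F U) (hyU : y ∈ U) (hy : y ∈ frontier D)
    (hnonneg : ∀ x ∈ D, 0 ≤ F x) (hzero : F y = 0)
    (hfderiv : ∀ b, fderiv ℝ F y b = μ * ⟪gradient h y, b⟫) (ha : ⟪gradient h y, a⟫ = 0) :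
    μ * fderiv ℝ (fderiv ℝ h) y a a ≤ fderiv ℝ (fderiv ℝ F) y a a := by
  by_contra! hlt
  obtain ⟨ε, hε, hμε⟩ := exists_pos_mul_lt (sub_pos.2 hlt) μ
  set κ := -fderiv ℝ (fderiv ℝ h) y a a + ε with hκ
  have hν := H.inner_gradient_self hy
  have hstay := eventually_lt_comp_parabola (a := a) (b := (κ / 2) • gradient h y) isOpen_univ
    H.contDiff.contDiffOn (mem_univ y) (by rw [← inner_gradient_left, ha])
    (by rw [← inner_gradient_left, inner_smul_right, hν]; linarith)
  have hneg : fderiv ℝ (fun x => -F x) = fun x => -fderiv ℝ F x := funext fun x => fderiv_fun_neg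
  have hdecrease := eventually_lt_comp_parabola (a := a) (b := (κ / 2) • gradient h y) hU hF.neg hyU
    (by simp [hfderiv, ha])
    (by
      rw [hneg, fderiv_fun_neg, neg_apply, neg_apply, neg_apply, hfderiv, inner_smul_right, hν, hκ]
      linarith)
  obtain ⟨t, hht, hFt⟩ := (hstay.and hdecrease).exists
  rw [H.eq_zero_of_mem_frontier hy] at hht
  rw [hzero] at hFt
  linarith [hnonneg _ (H.mem_iff.2 hht)]

end IsUniformlyConcaveDefFn

end DefiningFunction

section Barrier

variable {ι E : Type*} [Fintype ι] [NormedAddCommGroup E]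

section NormedSpace

variable [NormedSpace ℝ E] {U : Set E} {w : ι → E → E} {f k : E → ℝ} {y : E}

/-- The operator `f ↦ ∑ᵢ D²f(wᵢ, wᵢ)` attached to vector fields `w₁, …, wₘ`, which is degenerate
elliptic with coefficient matrix `∑ᵢ wᵢ wᵢᵀ`. -/
def frameLaplacian (w : ι → E → E) (f : E → ℝ) (y : E) : ℝ :=
  ∑ i, fderiv ℝ (fderiv ℝ f) y (w i y) (w i y)

lemma frameLaplacian_eq_of_hasDerivAt_line {F' : ι → ℝ → ℝ} {q : ι → ℝ} (hU : IsOpen U)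
    (hf : ContDiffOn ℝ ∞ f U) (hy : y ∈ U)
    (hF' : ∀ i, ∀ᶠ t in 𝓝 (0 : ℝ), HasDerivAt (fun t : ℝ => f (y + t • w i y)) (F' i t) t)
    (hq : ∀ i, HasDerivAt (F' i) (q i) 0) : frameLaplacian w f y = ∑ i, q i :=
  Finset.sum_congr rfl fun i _ =>
    fderiv_fderiv_apply_eq_of_hasDerivAt_line hU hf hy (hF' i) (hq i)

lemma frameLaplacian_add (hU : IsOpen U) (hf : ContDiffOn ℝ ∞ f U) (hk : ContDiffOn ℝ ∞ k U)
    (hy : y ∈ U) :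
    frameLaplacian w (fun x => f x + k x) y = frameLaplacian w f y + frameLaplacian w k y := by
  rw [frameLaplacian_eq_of_hasDerivAt_line hU (hf.add hk) hy
    (fun i => by
      filter_upwards [eventually_hasDerivAt_comp_line hU hf hy (w i y),
        eventually_hasDerivAt_comp_line hU hk hy (w i y)] with t h₁ h₂ using h₁.add h₂)
    (fun i => (hasDerivAt_fderiv_comp_line hU hf hy (w i y) (w i y)).add
      (hasDerivAt_fderiv_comp_line hU hk hy (w i y) (w i y))), Finset.sum_add_distrib]
  rfl

lemma frameLaplacian_const_mul (hU : IsOpen U) (hf : ContDiffOn ℝ ∞ f U) (hy : y ∈ U) (c : ℝ) :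
    frameLaplacian w (fun x => c * f x) y = c * frameLaplacian w f y := by
  rw [frameLaplacian_eq_of_hasDerivAt_line hU (contDiffOn_const.mul hf) hy
    (fun i => by
      filter_upwards [eventually_hasDerivAt_comp_line hU hf hy (w i y)] with t h₁
        using h₁.const_mul c)
    (fun i => (hasDerivAt_fderiv_comp_line hU hf hy (w i y) (w i y)).const_mul c),
    ← Finset.mul_sum]
  rfl

lemma frameLaplacian_nonpos_of_isLocalMax (hU : IsOpen U) (hf : ContDiffOn ℝ ∞ f U) (hy : y ∈ U)
    (hmax : IsLocalMax f y) : frameLaplacian w f y ≤ 0 :=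
  Finset.sum_nonpos fun i _ => fderiv_fderiv_nonpos_of_isLocalMax hU hf hy hmax (w i y)

end NormedSpace

namespace IsUniformlyConcaveDefFn

variable [InnerProductSpace ℝ E] [CompleteSpace E] {D : Set E} {h f : E → ℝ} {θ δ C m : ℝ}
  {w : ι → E → E} {y : E}

lemma frameLaplacian_le (H : IsUniformlyConcaveDefFn D h θ) (hw : δ ≤ ∑ i, ‖w i y‖ ^ 2) :
    frameLaplacian w h y ≤ -(θ * δ) :=
  calc frameLaplacian w h y
      ≤ ∑ i, -θ * ‖w i y‖ ^ 2 := Finset.sum_le_sum fun i _ => H.fderiv_fderiv_le y (w i y)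
    _ = -(θ * ∑ i, ‖w i y‖ ^ 2) := by rw [← Finset.mul_sum, neg_mul]
    _ ≤ -(θ * δ) := neg_le_neg (mul_le_mul_of_nonneg_left hw H.pos.le)

/- The multiple of `h` makes `f - K h` a strict subsolution, which has no interior maximum. -/
lemma le_add_mul_of_le_frameLaplacian (H : IsUniformlyConcaveDefFn D h θ)
    (hcpt : IsCompact (closure D)) (hδ : 0 < δ) (hw : ∀ y ∈ D, δ ≤ ∑ i, ‖w i y‖ ^ 2)
    (hfc : ContinuousOn f (closure D)) (hf : ContDiffOn ℝ ∞ f D) (hC : 0 ≤ C)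
    (hL : ∀ y ∈ D, -C ≤ frameLaplacian w f y) (hm : ∀ y ∈ frontier D, f y ≤ m)
    (hy : y ∈ closure D) : f y ≤ m + (C + 1) / (θ * δ) * h y := by
  set K := (C + 1) / (θ * δ) with hK
  have hpos : 0 < θ * δ := mul_pos H.pos hδ
  have hK₀ : 0 ≤ K := by positivity
  have hcont : ContinuousOn (fun x => f x + -K * h x) (closure D) :=
    hfc.add (continuous_const.mul H.contDiff.continuous).continuousOn
  obtain ⟨z, hz, hmax⟩ := hcpt.exists_isMaxOn ⟨y, hy⟩ hcont
  have hyz : f y + -K * h y ≤ f z + -K * h z := hmax hy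
  by_cases hzD : z ∈ D
  · have hnonpos := frameLaplacian_nonpos_of_isLocalMax (w := w) H.isOpen
      (hf.add (contDiffOn_const.mul H.contDiff.contDiffOn)) hzD
      (hmax.isLocalMax (mem_of_superset (H.isOpen.mem_nhds hzD) subset_closure))
    rw [frameLaplacian_add H.isOpen hf (contDiffOn_const.mul H.contDiff.contDiffOn) hzD,
      frameLaplacian_const_mul H.isOpen H.contDiff.contDiffOn hzD] at hnonpos
    have hKh : K * frameLaplacian w h z ≤ -(C + 1) :=
      calc K * frameLaplacian w h z
          ≤ K * -(θ * δ) := mul_le_mul_of_nonneg_left (H.frameLaplacian_le (hw z hzD)) hK₀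
        _ = -(C + 1) := by rw [mul_neg, hK, div_mul_cancel₀ _ hpos.ne']
    linarith [hL z hzD]
  · have hzf : z ∈ frontier D := ⟨hz, by rwa [H.isOpen.interior_eq]⟩
    rw [H.eq_zero_of_mem_frontier hzf] at hyz
    linarith [hm z hzf]

lemma fderiv_apply_le_of_le_frameLaplacian (H : IsUniformlyConcaveDefFn D h θ)
    (hcpt : IsCompact (closure D)) (hδ : 0 < δ) (hw : ∀ y ∈ D, δ ≤ ∑ i, ‖w i y‖ ^ 2) {a : E}
    {U : Set E} (hU : IsOpen U) (hDU : closure D ⊆ U) (hf : ContDiffOn ℝ ∞ f U) (hC : 0 ≤ C)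
    (hL : ∀ y ∈ D, -C ≤ frameLaplacian w f y) (hy : y ∈ frontier D)
    (hmax : IsMaxOn f (frontier D) y) (ha : 0 < ⟪gradient h y, a⟫) :
    fderiv ℝ f y a ≤ (C + 1) / (θ * δ) * ⟪gradient h y, a⟫ := by
  set K := (C + 1) / (θ * δ)
  have hfy : DifferentiableAt ℝ f y :=
    differentiableAt_of_contDiffOn_isOpen hU hf (hDU (frontier_subset_closure hy))
  have hhy : DifferentiableAt ℝ (fun x => K * h x) y := (H.differentiable y).const_mul K
  have hmax' : IsMaxOn (fun x => f x - K * h x) (closure D) y := fun x hx => by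
    have := H.le_add_mul_of_le_frameLaplacian hcpt hδ hw (hf.continuousOn.mono hDU)
      (hf.mono (subset_closure.trans hDU)) hC hL hmax hx
    change f x - K * h x ≤ f y - K * h y
    rw [H.eq_zero_of_mem_frontier hy]
    linarith
  have hle := H.fderiv_apply_nonpos hy (hfy.fun_sub hhy) hmax' ha
  rw [fderiv_fun_sub hfy hhy, fderiv_const_mul (H.differentiable y), sub_apply, smul_apply,
    smul_eq_mul, ← inner_gradient_left (f := h)] at hle
  linarith

end IsUniformlyConcaveDefFn

end Barrier

section Symmetry

variable {E : Type*} [NormedAddCommGroup E] [InnerProductSpace ℝ E] {U : Set E} {y : E}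

lemma inner_fderiv_apply_comm {T : E → E →L[ℝ] E} (hU : IsOpen U) (hT : ContDiffOn ℝ ∞ T U)
    (hsymm : ∀ x ∈ U, ∀ a b, ⟪T x a, b⟫ = ⟪a, T x b⟫) (hy : y ∈ U) (c a b : E) :
    ⟪fderiv ℝ T y c a, b⟫ = ⟪a, fderiv ℝ T y c b⟫ := by
  have hT' := fun a => (hasDerivAt_comp_line hU hT hy c).clm_apply (hasDerivAt_const 0 a)
  simpa using hasDerivAt_line_unique (F := fun x => ⟪T x a, b⟫) (G := fun x => ⟪a, T x b⟫) hU hy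
    (fun x hx => hsymm x hx a b) ((hT' a).inner ℝ (hasDerivAt_const 0 b))
    ((hasDerivAt_const 0 a).inner ℝ (hT' b))

variable {X : E → E}

lemma fderiv_fderiv_fderiv_apply_comm (hU : IsOpen U) (hX : ContDiffOn ℝ ∞ X U) (hy : y ∈ U)
    (a b d : E) :
    fderiv ℝ (fderiv ℝ (fderiv ℝ X)) y a b d = fderiv ℝ (fderiv ℝ (fderiv ℝ X)) y a d b := by
  have hX₃ := fun b d => ((hasDerivAt_comp_line hU (contDiffOn_fderiv hU (contDiffOn_fderiv hU hX))
    hy a).clm_apply (hasDerivAt_const 0 b)).clm_apply (hasDerivAt_const 0 d)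
  simpa using hasDerivAt_line_unique (F := fun x => fderiv ℝ (fderiv ℝ X) x b d)
    (G := fun x => fderiv ℝ (fderiv ℝ X) x d b) hU hy
    (fun x hx => fderiv_fderiv_apply_comm hU hX hx b d) (hX₃ b d) (hX₃ d b)

lemma inner_fderiv_fderiv_apply_comm {T : E → E →L[ℝ] E} (hU : IsOpen U)
    (hT : ContDiffOn ℝ ∞ T U) (hsymm : ∀ x ∈ U, ∀ a b, ⟪T x a, b⟫ = ⟪a, T x b⟫) (hy : y ∈ U)
    (c d a b : E) :
    ⟪fderiv ℝ (fderiv ℝ T) y c d a, b⟫ = ⟪a, fderiv ℝ (fderiv ℝ T) y c d b⟫ := by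
  have hT₂ := contDiffOn_fderiv hU hT
  have heq : fderiv ℝ (fun x => fderiv ℝ T x d) y c = fderiv ℝ (fderiv ℝ T) y c d := by
    simp [fderiv_clm_apply (differentiableAt_of_contDiffOn_isOpen hU hT₂ hy)
      (differentiableAt_const d)]
  simpa only [heq] using inner_fderiv_apply_comm hU (hT₂.clm_apply contDiffOn_const)
    (fun x hx a b => inner_fderiv_apply_comm hU hT hsymm hx d a b) hy c a b

lemma inner_fderiv_fderiv_fderiv_swap (hU : IsOpen U) (hX : ContDiffOn ℝ ∞ X U)
    (hsymm : ∀ x ∈ U, ∀ a b, ⟪fderiv ℝ X x a, b⟫ = ⟪a, fderiv ℝ X x b⟫) (hy : y ∈ U) (a b : E) :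
    ⟪a, fderiv ℝ (fderiv ℝ (fderiv ℝ X)) y b b a⟫ =
      ⟪b, fderiv ℝ (fderiv ℝ (fderiv ℝ X)) y a a b⟫ := by
  have hX₁ := contDiffOn_fderiv hU hX
  rw [fderiv_fderiv_fderiv_apply_comm hU hX hy b b a, fderiv_fderiv_apply_comm hU hX₁ hy b a,
    ← inner_fderiv_fderiv_apply_comm hU hX₁ hsymm hy,
    fderiv_fderiv_fderiv_apply_comm hU hX hy a b a, real_inner_comm]

lemma fderiv_fderiv_inner_apply_self {T : E → E →L[ℝ] E} {ξ : E → E} (hU : IsOpen U)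
    (hT : ContDiffOn ℝ ∞ T U) (hsymm : ∀ x ∈ U, ∀ a b, ⟪T x a, b⟫ = ⟪a, T x b⟫)
    (hξ : ContDiffOn ℝ ∞ ξ U) (hy : y ∈ U) (a : E) :
    fderiv ℝ (fderiv ℝ fun x => ⟪ξ x, T x (ξ x)⟫) y a a =
      ⟪ξ y, fderiv ℝ (fderiv ℝ T) y a a (ξ y)⟫ + 4 * ⟪fderiv ℝ T y a (ξ y), fderiv ℝ ξ y a⟫ +
        2 * ⟪fderiv ℝ ξ y a, T y (fderiv ℝ ξ y a)⟫ +
        2 * ⟪fderiv ℝ (fderiv ℝ ξ) y a a, T y (ξ y)⟫ := by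
  have hξ₀ := hasDerivAt_comp_line hU hξ hy a
  have hξ₁ := hasDerivAt_fderiv_comp_line hU hξ hy a a
  have hT₀ := hasDerivAt_comp_line hU hT hy a
  have hT₁ := hasDerivAt_fderiv_comp_line hU hT hy a a
  refine fderiv_fderiv_apply_eq_of_hasDerivAt_line
    (F' := fun t => ⟪ξ (y + t • a), fderiv ℝ T (y + t • a) a (ξ (y + t • a)) +
      T (y + t • a) (fderiv ℝ ξ (y + t • a) a)⟫ +
      ⟪fderiv ℝ ξ (y + t • a) a, T (y + t • a) (ξ (y + t • a))⟫)
    hU (hξ.inner ℝ (hT.clm_apply hξ)) hy ?_ ?_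
  · filter_upwards [eventually_hasDerivAt_comp_line hU hT hy a,
      eventually_hasDerivAt_comp_line hU hξ hy a] with t h₁ h₂
    exact h₂.inner ℝ (h₁.clm_apply h₂)
  · refine ((hξ₀.inner ℝ ((hT₁.clm_apply hξ₀).fun_add (hT₀.clm_apply hξ₁))).fun_add
      (hξ₁.inner ℝ (hT₀.clm_apply hξ₀))).congr_deriv ?_
    simp only [zero_smul, add_zero, inner_add_right]
    rw [← inner_fderiv_apply_comm hU hT hsymm hy a (ξ y) (fderiv ℝ ξ y a),
      ← hsymm y hy (ξ y) _, real_inner_comm (fderiv ℝ ξ y a) (fderiv ℝ T y a (ξ y)),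
      real_inner_comm (T y (ξ y)) (fderiv ℝ (fderiv ℝ ξ) y a a)]
    ring

lemma norm_le_of_inner_apply_self_le {T : E →L[ℝ] E} {M : ℝ}
    (hsymm : ∀ a b, ⟪T a, b⟫ = ⟪a, T b⟫) (hnonneg : ∀ a, 0 ≤ ⟪a, T a⟫) (hM : 0 ≤ M)
    (hle : ∀ a, ‖a‖ = 1 → ⟪a, T a⟫ ≤ M) : ‖T‖ ≤ M := by
  rw [ContinuousLinearMap.norm_eq_iSup_rayleighQuotient T hsymm]
  refine ciSup_le fun a => ?_
  rcases eq_or_ne a 0 with rfl | ha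
  · simpa [ContinuousLinearMap.rayleighQuotient] using hM
  have hunit := hle (‖a‖⁻¹ • a) (norm_smul_inv_norm ha)
  rw [map_smul, inner_smul_left, inner_smul_right, conj_trivial, ← mul_assoc, ← sq, inv_pow,
    inv_mul_eq_div] at hunit
  have hquot : T.rayleighQuotient a = ⟪a, T a⟫ / ‖a‖ ^ 2 := by
    rw [ContinuousLinearMap.rayleighQuotient, ContinuousLinearMap.reApplyInnerSelf_apply,
      real_inner_comm]
    rfl
  rw [hquot, abs_of_nonneg (div_nonneg (hnonneg a) (sq_nonneg _))]
  exact hunit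

end Symmetry

/-- The fixed data of the dual problem, on which all constants are allowed to depend: the domain
`D` of the Legendre transform and the domain `Ω` its gradient maps to, with uniformly concave
defining functions `h` and `g`; vector fields `r i` near `closure D`, whose sum of squares
`∑ᵢ rᵢ rᵢᵀ` is the coefficient matrix of the equation; and bounds `Cw`, `δ` for the fields
`A⁻¹ rᵢ`. -/
structure DualProblem (ι E : Type*) [Fintype ι] [NormedAddCommGroup E] [InnerProductSpace ℝ E]
    [CompleteSpace E] where
  D : Set E
  Ω : Set E
  h : E → ℝ
  g : E → ℝ
  θD : ℝ
  θΩ : ℝ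
  R : Set E
  r : ι → E → E
  Cw : ℝ
  δ : ℝ
  defFn_D : IsUniformlyConcaveDefFn D h θD
  defFn_Ω : IsUniformlyConcaveDefFn Ω g θΩ
  isCompact_closure_D : IsCompact (closure D)
  isCompact_closure_Ω : IsCompact (closure Ω)
  isOpen_R : IsOpen R
  closure_D_subset_R : closure D ⊆ R
  contDiffOn_r : ∀ i, ContDiffOn ℝ ∞ (r i) R
  Cw_nonneg : 0 ≤ Cw
  δ_pos : 0 < δ

namespace DualProblem

variable {ι E : Type*} [Fintype ι] [NormedAddCommGroup E] [InnerProductSpace ℝ E]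
  [CompleteSpace E] {P : DualProblem ι E} {y : E}

lemma mem_R (hy : y ∈ P.D) : y ∈ P.R := P.closure_D_subset_R (subset_closure hy)

lemma exists_norm_jet_r_le (P : DualProblem ι E) :
    ∃ C, 0 ≤ C ∧ ∀ i, ∀ y ∈ closure P.D, ‖P.r i y‖ ≤ C ∧ ‖fderiv ℝ (P.r i) y‖ ≤ C ∧
      ‖fderiv ℝ (fderiv ℝ (P.r i)) y‖ ≤ C := by
  choose C hC hr using fun i => exists_norm_jet_le P.isCompact_closure_D P.isOpen_R
    P.closure_D_subset_R (P.contDiffOn_r i)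
  refine ⟨∑ i, C i, Finset.sum_nonneg fun i _ => hC i, fun i y hy => ?_⟩
  have hle : C i ≤ ∑ i, C i := Finset.single_le_sum (fun i _ => hC i) (Finset.mem_univ i)
  obtain ⟨h₀, h₁, h₂⟩ := hr i y hy
  exact ⟨h₀.trans hle, h₁.trans hle, h₂.trans hle⟩

/-- A solution of the dual problem `P`: a map `X` (the gradient of the Legendre transform) sending
`D` to `Ω` and boundary to boundary, with symmetric positive definite derivative `A`, which solves
`∑ᵢ ⟪rᵢ, A⁻¹ rᵢ⟫ = c`. The fields `w i = A⁻¹ rᵢ` are part of the data. -/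
structure Solution (P : DualProblem ι E) where
  U : Set E
  X : E → E
  w : ι → E → E
  c : ℝ
  isOpen_U : IsOpen U
  closure_D_subset_U : closure P.D ⊆ U
  contDiffOn_X : ContDiffOn ℝ ∞ X U
  inner_fderiv_X_comm : ∀ y ∈ U, ∀ a b, ⟪fderiv ℝ X y a, b⟫ = ⟪a, fderiv ℝ X y b⟫
  inner_fderiv_X_pos : ∀ y ∈ closure P.D, ∀ a, a ≠ 0 → 0 < ⟪a, fderiv ℝ X y a⟫
  contDiffOn_w : ∀ i, ContDiffOn ℝ ∞ (w i) P.D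
  fderiv_X_w : ∀ y ∈ P.D, ∀ i, fderiv ℝ X y (w i y) = P.r i y
  sum_inner_r_w : ∀ y ∈ P.D, ∑ i, ⟪P.r i y, w i y⟫ = c
  norm_w_le : ∀ y ∈ P.D, ∀ i, ‖w i y‖ ≤ P.Cw
  le_sum_norm_w_sq : ∀ y ∈ P.D, P.δ ≤ ∑ i, ‖w i y‖ ^ 2
  X_mem : ∀ y ∈ P.D, X y ∈ P.Ω
  X_mem_frontier : ∀ y ∈ frontier P.D, X y ∈ frontier P.Ω

namespace Solution

variable {S : P.Solution}

/-- The Hessian of the Legendre transform. -/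
abbrev A (S : P.Solution) : E → E →L[ℝ] E := fderiv ℝ S.X

lemma contDiffOn_A (S : P.Solution) : ContDiffOn ℝ ∞ S.A S.U :=
  contDiffOn_fderiv S.isOpen_U S.contDiffOn_X

lemma mem_U (S : P.Solution) (hy : y ∈ P.D) : y ∈ S.U := S.closure_D_subset_U (subset_closure hy)

lemma inner_A_self_nonneg (S : P.Solution) (hy : y ∈ closure P.D) (a : E) :
    0 ≤ ⟪a, S.A y a⟫ := by
  rcases eq_or_ne a 0 with rfl | ha
  · rw [inner_zero_left]
  · exact (S.inner_fderiv_X_pos y hy a ha).le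

lemma fderiv_A_w_add (S : P.Solution) (hy : y ∈ P.D) (a : E) (i : ι) :
    fderiv ℝ S.A y a (S.w i y) + S.A y (fderiv ℝ (S.w i) y a) = fderiv ℝ (P.r i) y a := by
  have hAw := (hasDerivAt_comp_line S.isOpen_U S.contDiffOn_A (S.mem_U hy) a).clm_apply
    (hasDerivAt_comp_line P.defFn_D.isOpen (S.contDiffOn_w i) hy a)
  simpa using hasDerivAt_line_unique (F := fun x => S.A x (S.w i x)) P.defFn_D.isOpen hy
    (fun x hx => S.fderiv_X_w x hx i) hAw
    (hasDerivAt_comp_line P.isOpen_R (P.contDiffOn_r i) (mem_R hy) a)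

lemma sum_inner_fderiv_A_w (S : P.Solution) (hy : y ∈ P.D) (a : E) :
    ∑ i, ⟪S.w i y, fderiv ℝ S.A y a (S.w i y)⟫ = ∑ i, 2 * ⟪fderiv ℝ (P.r i) y a, S.w i y⟫ := by
  have hsum : HasDerivAt (fun t : ℝ => ∑ i, ⟪P.r i (y + t • a), S.w i (y + t • a)⟫)
      (∑ i, (⟪P.r i y, fderiv ℝ (S.w i) y a⟫ + ⟪fderiv ℝ (P.r i) y a, S.w i y⟫)) 0 :=
    HasDerivAt.fun_sum fun i _ => by
      simpa using (hasDerivAt_comp_line P.isOpen_R (P.contDiffOn_r i) (mem_R hy) a).inner ℝ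
        (hasDerivAt_comp_line P.defFn_D.isOpen (S.contDiffOn_w i) hy a)
  have hzero := hasDerivAt_line_unique (F := fun x => ∑ i, ⟪P.r i x, S.w i x⟫)
    (G := fun _ => S.c) P.defFn_D.isOpen hy S.sum_inner_r_w hsum (hasDerivAt_const 0 S.c)
  rw [← sub_zero (∑ i, 2 * _), ← hzero, ← Finset.sum_sub_distrib]
  refine Finset.sum_congr rfl fun i _ => ?_
  rw [← S.fderiv_X_w y hy i, S.inner_fderiv_X_comm y (S.mem_U hy), ← S.fderiv_A_w_add hy a i,
    inner_add_left, real_inner_comm (S.w i y) (S.A y _),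
    real_inner_comm (S.w i y) (fderiv ℝ S.A y a _)]
  ring

lemma sum_inner_fderiv_fderiv_A_w (S : P.Solution) (hy : y ∈ P.D) (a : E) :
    ∑ i, ⟪S.w i y, fderiv ℝ (fderiv ℝ S.A) y a a (S.w i y)⟫ =
      ∑ i, (2 * ⟪fderiv ℝ (fderiv ℝ (P.r i)) y a a, S.w i y⟫ +
        2 * ⟪fderiv ℝ (S.w i) y a, S.A y (fderiv ℝ (S.w i) y a)⟫) := by
  have hw := fun i => hasDerivAt_comp_line P.defFn_D.isOpen (S.contDiffOn_w i) hy a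
  have hlhs : HasDerivAt (fun t : ℝ => ∑ i, ⟪S.w i (y + t • a),
      fderiv ℝ S.A (y + t • a) a (S.w i (y + t • a))⟫)
      (∑ i, (⟪S.w i y, fderiv ℝ (fderiv ℝ S.A) y a a (S.w i y) +
        fderiv ℝ S.A y a (fderiv ℝ (S.w i) y a)⟫ +
        ⟪fderiv ℝ (S.w i) y a, fderiv ℝ S.A y a (S.w i y)⟫)) 0 :=
    HasDerivAt.fun_sum fun i _ => by
      simpa using (hw i).inner ℝ ((hasDerivAt_fderiv_comp_line S.isOpen_U S.contDiffOn_A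
        (S.mem_U hy) a a).clm_apply (hw i))
  have hrhs : HasDerivAt (fun t : ℝ => ∑ i, 2 * ⟪fderiv ℝ (P.r i) (y + t • a) a,
      S.w i (y + t • a)⟫) (∑ i, 2 * (⟪fderiv ℝ (P.r i) y a, fderiv ℝ (S.w i) y a⟫ +
        ⟪fderiv ℝ (fderiv ℝ (P.r i)) y a a, S.w i y⟫)) 0 :=
    HasDerivAt.fun_sum fun i _ => by
      simpa using ((hasDerivAt_fderiv_comp_line P.isOpen_R (P.contDiffOn_r i) (mem_R hy)
        a a).inner ℝ (hw i)).const_mul 2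
  have heq := hasDerivAt_line_unique
    (F := fun x => ∑ i, ⟪S.w i x, fderiv ℝ S.A x a (S.w i x)⟫)
    (G := fun x => ∑ i, 2 * ⟪fderiv ℝ (P.r i) x a, S.w i x⟫) P.defFn_D.isOpen hy
    (fun x hx => S.sum_inner_fderiv_A_w hx a) hlhs hrhs
  rw [← sub_eq_zero] at heq ⊢
  rw [← heq, ← Finset.sum_sub_distrib, ← Finset.sum_sub_distrib]
  refine Finset.sum_congr rfl fun i _ => ?_
  have hsymm := inner_fderiv_apply_comm S.isOpen_U S.contDiffOn_A S.inner_fderiv_X_comm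
    (S.mem_U hy) a (S.w i y) (fderiv ℝ (S.w i) y a)
  rw [← S.fderiv_A_w_add hy a i, inner_add_right, inner_add_left, ← hsymm,
    real_inner_comm (fderiv ℝ (S.w i) y a) (fderiv ℝ S.A y a (S.w i y)),
    real_inner_comm (fderiv ℝ (S.w i) y a) (S.A y _)]
  ring

end Solution

end DualProblem

lemma fderiv_fderiv_comp_prodMk {E : Type*} [NormedAddCommGroup E] [NormedSpace ℝ E] {U : Set E}
    {X : E → E} {Q : E × E → ℝ} {y : E} (hU : IsOpen U) (hX : ContDiffOn ℝ ∞ X U)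
    (hQ : ContDiff ℝ ∞ Q) (hy : y ∈ U) (a : E) :
    fderiv ℝ (fderiv ℝ fun x => Q (x, X x)) y a a =
      fderiv ℝ (fderiv ℝ Q) (y, X y) (a, fderiv ℝ X y a) (a, fderiv ℝ X y a) +
        fderiv ℝ Q (y, X y) (0, fderiv ℝ (fderiv ℝ X) y a a) := by
  have hQ₁ : Differentiable ℝ Q := hQ.differentiable (by simp)
  have hQ₂ : Differentiable ℝ (fderiv ℝ Q) :=
    (hQ.fderiv_right (m := ∞) (by simp)).differentiable (by simp)
  refine fderiv_fderiv_apply_eq_of_hasDerivAt_line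
    (F' := fun t => fderiv ℝ Q (y + t • a, X (y + t • a)) (a, fderiv ℝ X (y + t • a) a))
    hU (hQ.comp_contDiffOn (contDiffOn_id.prodMk hX)) hy ?_ ?_
  · filter_upwards [eventually_hasDerivAt_comp_line hU hX hy a] with t ht
    exact (hQ₁ _).hasFDerivAt.comp_hasDerivAt t ((hasDerivAt_add_smul y a t).prodMk ht)
  · have hgraph := (hasDerivAt_add_smul y a 0).prodMk (hasDerivAt_comp_line hU hX hy a)
    have hQ' := (hQ₂ (y + (0 : ℝ) • a, X (y + (0 : ℝ) • a))).hasFDerivAt.comp_hasDerivAt 0 hgraph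
    have hX' := (hasDerivAt_const (0 : ℝ) a).prodMk (hasDerivAt_fderiv_comp_line hU hX hy a a)
    simpa using hQ'.clm_apply hX'

namespace DualProblem

variable {ι E : Type*} [Fintype ι] [NormedAddCommGroup E] [InnerProductSpace ℝ E]
  [CompleteSpace E] {P : DualProblem ι E} {y : E}

namespace Solution

variable {S : P.Solution} {ξ : E → E}

lemma norm_sum_fderiv_A_w_le (S : P.Solution) {C : ℝ} (hC : 0 ≤ C)
    (hr : ∀ i, ‖fderiv ℝ (P.r i) y‖ ≤ C) (hy : y ∈ P.D) :
    ‖∑ i, fderiv ℝ S.A y (S.w i y) (S.w i y)‖ ≤ ∑ _i : ι, 2 * (C * P.Cw) := by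
  have := P.Cw_nonneg
  set v := ∑ i, fderiv ℝ S.A y (S.w i y) (S.w i y) with hv
  have hself : ⟪v, v⟫ = ∑ i, 2 * ⟪fderiv ℝ (P.r i) y v, S.w i y⟫ := by
    rw [← S.sum_inner_fderiv_A_w hy v]
    nth_rw 1 [hv]
    rw [sum_inner]
    refine Finset.sum_congr rfl fun i _ => ?_
    rw [inner_fderiv_apply_comm S.isOpen_U S.contDiffOn_A S.inner_fderiv_X_comm (S.mem_U hy),
      fderiv_fderiv_apply_comm S.isOpen_U S.contDiffOn_X (S.mem_U hy)]
  have hle : ‖v‖ * ‖v‖ ≤ (∑ _i : ι, 2 * (C * P.Cw)) * ‖v‖ := by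
    rw [← real_inner_self_eq_norm_mul_norm, hself, Finset.sum_mul]
    refine Finset.sum_le_sum fun i _ => ?_
    calc 2 * ⟪fderiv ℝ (P.r i) y v, S.w i y⟫
        ≤ 2 * (C * ‖v‖ * P.Cw) := by
          gcongr
          refine (real_inner_le_norm _ _).trans ?_
          gcongr
          · exact (fderiv ℝ (P.r i) y).le_of_opNorm_le (hr i) v
          · exact S.norm_w_le y hy i
      _ = 2 * (C * P.Cw) * ‖v‖ := by ring
  rcases (norm_nonneg v).eq_or_lt with hv₀ | hv₀
  · rw [← hv₀]
    positivity
  · exact le_of_mul_le_mul_right hle hv₀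

lemma X_mem_closure (S : P.Solution) (hy : y ∈ closure P.D) : S.X y ∈ closure P.Ω := by
  by_cases hyD : y ∈ P.D
  · exact subset_closure (S.X_mem y hyD)
  · exact frontier_subset_closure
      (S.X_mem_frontier y ⟨hy, by rwa [P.defFn_D.isOpen.interior_eq]⟩)

lemma le_frameLaplacian_inner_A (S : P.Solution) (hξ : ContDiff ℝ ∞ ξ) (hy : y ∈ P.D) :
    ∑ i, (2 * ⟪fderiv ℝ (fderiv ℝ (P.r i)) y (ξ y) (ξ y), S.w i y⟫ +
        4 * ⟪fderiv ℝ (P.r i) y (ξ y), fderiv ℝ ξ y (S.w i y)⟫ +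
        2 * ⟪fderiv ℝ (fderiv ℝ ξ) y (S.w i y) (S.w i y), S.A y (ξ y)⟫) ≤
      frameLaplacian S.w (fun x => ⟪ξ x, S.A x (ξ x)⟫) y := by
  have hyU := S.mem_U hy
  have hswap : ∑ i, ⟪ξ y, fderiv ℝ (fderiv ℝ S.A) y (S.w i y) (S.w i y) (ξ y)⟫ =
      ∑ i, (2 * ⟪fderiv ℝ (fderiv ℝ (P.r i)) y (ξ y) (ξ y), S.w i y⟫ +
        2 * ⟪fderiv ℝ (S.w i) y (ξ y), S.A y (fderiv ℝ (S.w i) y (ξ y))⟫) := by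
    rw [← S.sum_inner_fderiv_fderiv_A_w hy (ξ y)]
    exact Finset.sum_congr rfl fun i _ => inner_fderiv_fderiv_fderiv_swap S.isOpen_U
      S.contDiffOn_X S.inner_fderiv_X_comm hyU (ξ y) (S.w i y)
  simp only [frameLaplacian, fderiv_fderiv_inner_apply_self S.isOpen_U S.contDiffOn_A
    S.inner_fderiv_X_comm hξ.contDiffOn hyU, Finset.sum_add_distrib, hswap]
  simp only [← Finset.sum_add_distrib]
  refine Finset.sum_le_sum fun i _ => ?_
  have hsq := S.inner_A_self_nonneg (subset_closure hy)
    (fderiv ℝ (S.w i) y (ξ y) - fderiv ℝ ξ y (S.w i y))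
  rw [map_sub, inner_sub_left, inner_sub_right, inner_sub_right,
    ← S.inner_fderiv_X_comm y hyU (fderiv ℝ (S.w i) y (ξ y)) (fderiv ℝ ξ y (S.w i y)),
    real_inner_comm (S.A y (fderiv ℝ (S.w i) y (ξ y))) (fderiv ℝ ξ y (S.w i y))] at hsq
  rw [fderiv_fderiv_apply_comm S.isOpen_U S.contDiffOn_X hyU (S.w i y) (ξ y),
    ← S.fderiv_A_w_add hy (ξ y) i, inner_add_left]
  linarith

lemma neg_le_frameLaplacian_inner_A (S : P.Solution) {C Q₀ Q₁ Q₂ M : ℝ} (hξ : ContDiff ℝ ∞ ξ)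
    (hy : y ∈ P.D) (hr₁ : ∀ i, ‖fderiv ℝ (P.r i) y‖ ≤ C)
    (hr₂ : ∀ i, ‖fderiv ℝ (fderiv ℝ (P.r i)) y‖ ≤ C) (hξ₀ : ‖ξ y‖ ≤ Q₀)
    (hξ₁ : ‖fderiv ℝ ξ y‖ ≤ Q₁) (hξ₂ : ‖fderiv ℝ (fderiv ℝ ξ) y‖ ≤ Q₂) (hM : ‖S.A y‖ ≤ M) :
    -∑ _i : ι, (2 * (C * Q₀ * Q₀ * P.Cw) + 4 * (C * Q₀ * (Q₁ * P.Cw)) +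
        2 * (Q₂ * P.Cw * P.Cw * (M * Q₀))) ≤
      frameLaplacian S.w (fun x => ⟪ξ x, S.A x (ξ x)⟫) y := by
  refine le_trans ?_ (S.le_frameLaplacian_inner_A hξ hy)
  rw [← Finset.sum_neg_distrib]
  refine Finset.sum_le_sum fun i _ => ?_
  have hw := S.norm_w_le y hy i
  have hinner : ∀ {a b : E} {α β : ℝ}, ‖a‖ ≤ α → ‖b‖ ≤ β → -(α * β) ≤ ⟪a, b⟫ := fun ha hb =>
    (abs_le.1 ((abs_real_inner_le_norm _ _).trans
      (mul_le_mul ha hb (norm_nonneg _) ((norm_nonneg _).trans ha)))).1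
  have h₁ := hinner (ContinuousLinearMap.le_of_opNorm₂_le_of_le _ (hr₂ i) hξ₀ hξ₀) hw
  have h₂ := hinner (ContinuousLinearMap.le_of_opNorm_le_of_le _ (hr₁ i) hξ₀)
    (ContinuousLinearMap.le_of_opNorm_le_of_le _ hξ₁ hw)
  have h₃ := hinner (ContinuousLinearMap.le_of_opNorm₂_le_of_le _ hξ₂ hw hw)
    (ContinuousLinearMap.le_of_opNorm_le_of_le _ hM hξ₀)
  linarith

end Solution

lemma exists_abs_frameLaplacian_comp_le (P : DualProblem ι E) {Q : E × E → ℝ}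
    (hQ : ContDiff ℝ ∞ Q) :
    ∃ C, 0 ≤ C ∧ ∀ S : P.Solution, ∀ y ∈ P.D,
      |frameLaplacian S.w (fun x => Q (x, S.X x)) y| ≤ C := by
  obtain ⟨Cr, hCr, hr⟩ := P.exists_norm_jet_r_le
  obtain ⟨CQ, hCQ, hQle⟩ := exists_norm_jet_le (P.isCompact_closure_D.prod P.isCompact_closure_Ω)
    isOpen_univ (subset_univ _) hQ.contDiffOn
  have hCw := P.Cw_nonneg
  refine ⟨(∑ _i : ι, CQ * (P.Cw + Cr) * (P.Cw + Cr)) + CQ * ∑ _i : ι, 2 * (Cr * P.Cw),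
    by positivity, fun S y hy => ?_⟩
  have hyc := subset_closure hy
  obtain ⟨-, hQ₁, hQ₂⟩ := hQle (y, S.X y) ⟨hyc, S.X_mem_closure hyc⟩
  simp only [frameLaplacian, fderiv_fderiv_comp_prodMk S.isOpen_U S.contDiffOn_X hQ (S.mem_U hy),
    Finset.sum_add_distrib]
  refine (abs_add_le _ _).trans (add_le_add ?_ ?_)
  · refine (Finset.abs_sum_le_sum_abs _ _).trans (Finset.sum_le_sum fun i _ => ?_)
    have hpair : ‖(S.w i y, S.A y (S.w i y))‖ ≤ P.Cw + Cr := by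
      rw [S.fderiv_X_w y hy i, Prod.norm_mk]
      exact max_le ((S.norm_w_le y hy i).trans (le_add_of_nonneg_right hCr))
        ((hr i y hyc).1.trans (le_add_of_nonneg_left hCw))
    exact ContinuousLinearMap.le_of_opNorm₂_le_of_le _ hQ₂ hpair hpair
  · rw [← map_sum, ← prod_mk_sum, Finset.sum_const_zero]
    refine ContinuousLinearMap.le_of_opNorm_le_of_le _ hQ₁ ?_
    rw [Prod.norm_mk, norm_zero]
    exact max_le (by positivity) (S.norm_sum_fderiv_A_w_le hCr (fun i => (hr i y hyc).2.1) hy)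

end DualProblem

namespace DualProblem

variable {ι E : Type*} [Fintype ι] [NormedAddCommGroup E] [InnerProductSpace ℝ E]
  [CompleteSpace E] {P : DualProblem ι E} {S : P.Solution} {y : E}

/-- The extension of the inner unit normal of `∂D` given by the defining function. -/
abbrev ν (P : DualProblem ι E) : E → E := gradient P.h

lemma contDiff_ν (P : DualProblem ι E) : ContDiff ℝ ∞ P.ν := contDiff_gradient P.defFn_D.contDiff

namespace Solution

/-- The inner unit normal of `∂Ω` pulled back by `X`: the oblique direction of the boundary
condition `g ∘ X = 0`. -/
abbrev β (S : P.Solution) (y : E) : E := gradient P.g (S.X y)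

lemma contDiffOn_β (S : P.Solution) : ContDiffOn ℝ ∞ S.β S.U :=
  (contDiff_gradient P.defFn_Ω.contDiff).comp_contDiffOn S.contDiffOn_X

lemma mem_U_of_mem_frontier (S : P.Solution) (hy : y ∈ frontier P.D) : y ∈ S.U :=
  S.closure_D_subset_U (frontier_subset_closure hy)

lemma norm_β (S : P.Solution) (hy : y ∈ frontier P.D) : ‖S.β y‖ = 1 :=
  P.defFn_Ω.norm_gradient _ (S.X_mem_frontier y hy)

lemma g_X_eq_zero (S : P.Solution) (hy : y ∈ frontier P.D) : P.g (S.X y) = 0 :=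
  P.defFn_Ω.eq_zero_of_mem_frontier (S.X_mem_frontier y hy)

lemma g_X_nonneg (S : P.Solution) (hy : y ∈ closure P.D) : 0 ≤ P.g (S.X y) :=
  P.defFn_Ω.nonneg_of_mem_closure (S.X_mem_closure hy)

lemma contDiffOn_g_X (S : P.Solution) : ContDiffOn ℝ ∞ (fun x => P.g (S.X x)) S.U :=
  P.defFn_Ω.contDiff.comp_contDiffOn S.contDiffOn_X

lemma fderiv_g_X_apply (S : P.Solution) (hy : y ∈ S.U) (b : E) :
    fderiv ℝ (fun x => P.g (S.X x)) y b = ⟪S.A y (S.β y), b⟫ := by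
  have hX := differentiableAt_of_contDiffOn_isOpen S.isOpen_U S.contDiffOn_X hy
  rw [S.inner_fderiv_X_comm y hy, inner_gradient_left]
  exact congr($(((P.defFn_Ω.differentiable _).hasFDerivAt.comp y hX.hasFDerivAt).fderiv) b)

lemma fderiv_fderiv_g_X_apply (S : P.Solution) (hy : y ∈ S.U) (a : E) :
    fderiv ℝ (fderiv ℝ fun x => P.g (S.X x)) y a a =
      ⟪fderiv ℝ (gradient P.g) (S.X y) (S.A y a), S.A y a⟫ +
        ⟪S.β y, fderiv ℝ S.A y a a⟫ := by
  refine fderiv_fderiv_apply_eq_of_hasDerivAt_line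
    (F' := fun t => ⟪S.β (y + t • a), S.A (y + t • a) a⟫) S.isOpen_U S.contDiffOn_g_X hy ?_ ?_
  · filter_upwards [eventually_hasDerivAt_comp_line S.isOpen_U S.contDiffOn_X hy a] with t ht
    rw [inner_gradient_left]
    exact (P.defFn_Ω.differentiable _).hasFDerivAt.comp_hasDerivAt t ht
  · have hg : DifferentiableAt ℝ (gradient P.g) (S.X (y + (0 : ℝ) • a)) :=
      (contDiff_gradient P.defFn_Ω.contDiff).differentiable (by simp) _
    have hβ := hg.hasFDerivAt.comp_hasDerivAt 0
      (hasDerivAt_comp_line S.isOpen_U S.contDiffOn_X hy a)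
    simpa [add_comm] using hβ.inner ℝ
      (hasDerivAt_fderiv_comp_line S.isOpen_U S.contDiffOn_X hy a a)

lemma A_β_eq (S : P.Solution) (hy : y ∈ frontier P.D) :
    S.A y (S.β y) = ‖S.A y (S.β y)‖ • P.ν y := by
  have hyU := S.mem_U_of_mem_frontier hy
  have hdiff := differentiableAt_of_contDiffOn_isOpen S.isOpen_U S.contDiffOn_g_X hyU
  have hmax : IsMaxOn (fun x => -P.g (S.X x)) (closure P.D) y := fun x hx => by
    simpa [S.g_X_eq_zero hy] using S.g_X_nonneg hx
  obtain ⟨μ, hμ, hfderiv⟩ := P.defFn_D.exists_fderiv_eq_neg_mul hy hdiff.fun_neg hmax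
  have heq : S.A y (S.β y) = μ • P.ν y := ext_inner_right ℝ fun b => by
    have := hfderiv b
    rw [fderiv_fun_neg, neg_apply, S.fderiv_g_X_apply hyU, neg_mul, neg_inj] at this
    rw [this, inner_smul_left, conj_trivial]
  rw [heq, norm_smul, P.defFn_D.norm_gradient y hy, mul_one, Real.norm_of_nonneg hμ]

lemma inner_A_β_self (S : P.Solution) (hy : y ∈ frontier P.D) :
    ⟪S.β y, S.A y (S.β y)⟫ = ‖S.A y (S.β y)‖ * ⟪S.β y, P.ν y⟫ := by
  rw [← inner_smul_right, ← S.A_β_eq hy]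

lemma inner_β_ν_pos (S : P.Solution) (hy : y ∈ frontier P.D) : 0 < ⟪S.β y, P.ν y⟫ := by
  have hβ : S.β y ≠ 0 := norm_ne_zero_iff.1 (by rw [S.norm_β hy]; exact one_ne_zero)
  have hpos := S.inner_fderiv_X_pos y (frontier_subset_closure hy) _ hβ
  rw [S.inner_A_β_self hy] at hpos
  exact pos_of_mul_pos_right hpos (norm_nonneg _)

lemma inner_β_ν_le_one (S : P.Solution) (hy : y ∈ frontier P.D) : ⟪S.β y, P.ν y⟫ ≤ 1 := by
  simpa only [S.norm_β hy, P.defFn_D.norm_gradient y hy, mul_one] using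
    real_inner_le_norm (S.β y) (P.ν y)

lemma contDiffOn_inner_β_ν (S : P.Solution) :
    ContDiffOn ℝ ∞ (fun x => ⟪S.β x, P.ν x⟫) S.U :=
  S.contDiffOn_β.inner ℝ P.contDiff_ν.contDiffOn

lemma fderiv_inner_β_ν_le (S : P.Solution) (hy : y ∈ frontier P.D) :
    fderiv ℝ (fun x => ⟪S.β x, P.ν x⟫) y (S.β y) ≤ -P.θD := by
  have hyU := S.mem_U_of_mem_frontier hy
  have hβ := hasDerivAt_comp_line S.isOpen_U S.contDiffOn_β hyU (S.β y)
  have hβ' : fderiv ℝ S.β y (S.β y) =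
      ‖S.A y (S.β y)‖ • fderiv ℝ (gradient P.g) (S.X y) (P.ν y) := by
    have hg := (contDiff_gradient P.defFn_Ω.contDiff).differentiable (by simp) (S.X y)
    have hX := differentiableAt_of_contDiffOn_isOpen S.isOpen_U S.contDiffOn_X hyU
    rw [← map_smul, ← S.A_β_eq hy]
    exact congr($((hg.hasFDerivAt.comp y hX.hasFDerivAt).fderiv) (S.β y))
  have hν := hasDerivAt_comp_line isOpen_univ P.contDiff_ν.contDiffOn (mem_univ y) (S.β y)
  rw [fderiv_apply_eq_of_hasDerivAt_line (d := ⟪S.β y, fderiv ℝ P.ν y (S.β y)⟫ +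
      ⟪fderiv ℝ S.β y (S.β y), P.ν y⟫)
    (differentiableAt_of_contDiffOn_isOpen S.isOpen_U S.contDiffOn_inner_β_ν hyU)
    (by simpa using hβ.inner ℝ hν), hβ', inner_smul_left, conj_trivial,
    real_inner_comm (P.ν y)]
  have hD := P.defFn_D.concave y (S.β y)
  have hΩ := P.defFn_Ω.concave (S.X y) (P.ν y)
  rw [S.norm_β hy, one_pow, mul_one] at hD
  rw [P.defFn_D.norm_gradient y hy, one_pow, mul_one] at hΩ
  have := mul_nonpos_of_nonneg_of_nonpos (norm_nonneg (S.A y (S.β y)))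
    (hΩ.trans (neg_nonpos.2 P.defFn_Ω.pos.le))
  linarith

end Solution

lemma isCompact_frontier_D (P : DualProblem ι E) : IsCompact (frontier P.D) :=
  P.isCompact_closure_D.of_isClosed_subset isClosed_frontier frontier_subset_closure

lemma exists_norm_A_β_le (P : DualProblem ι E) :
    ∃ K, 0 ≤ K ∧ ∀ S : P.Solution, ∀ y ∈ frontier P.D, ‖S.A y (S.β y)‖ ≤ K := by
  obtain ⟨C, hC, hL⟩ := P.exists_abs_frameLaplacian_comp_le (Q := fun z => P.g z.2)
    (P.defFn_Ω.contDiff.comp contDiff_snd)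
  have := P.defFn_D.pos
  have := P.δ_pos
  refine ⟨(C + 1) / (P.θD * P.δ), by positivity, fun S y hy => ?_⟩
  have hν := P.defFn_D.inner_gradient_self hy
  have hmax : IsMaxOn (fun x => P.g (S.X x)) (frontier P.D) y := fun x hx =>
    ((S.g_X_eq_zero hx).trans (S.g_X_eq_zero hy).symm).le
  have hle := P.defFn_D.fderiv_apply_le_of_le_frameLaplacian P.isCompact_closure_D P.δ_pos
    S.le_sum_norm_w_sq S.isOpen_U S.closure_D_subset_U S.contDiffOn_g_X hC
    (fun x hx => (abs_le.1 (hL S x hx)).1) hy hmax (hν.symm ▸ one_pos)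
  rwa [S.fderiv_g_X_apply (S.mem_U_of_mem_frontier hy), S.A_β_eq hy, inner_smul_left, hν,
    conj_trivial, mul_one, mul_one] at hle

lemma exists_le_inner_β_ν (P : DualProblem ι E) :
    ∃ χ, 0 < χ ∧ ∀ S : P.Solution, ∀ y ∈ frontier P.D, χ ≤ ⟪S.β y, P.ν y⟫ := by
  obtain ⟨C, hC, hL⟩ := P.exists_abs_frameLaplacian_comp_le
    (Q := fun z => ⟪gradient P.g z.2, P.ν z.1⟫)
    (((contDiff_gradient P.defFn_Ω.contDiff).comp contDiff_snd).inner ℝ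
      (P.contDiff_ν.comp contDiff_fst))
  have hθ := P.defFn_D.pos
  have hK : 0 < (C + 1) / (P.θD * P.δ) := div_pos (by linarith) (mul_pos hθ P.δ_pos)
  refine ⟨P.θD / ((C + 1) / (P.θD * P.δ)), div_pos hθ hK, fun S y hy => ?_⟩
  obtain ⟨z, hz, hmin⟩ := P.isCompact_frontier_D.exists_isMinOn ⟨y, hy⟩
    (S.contDiffOn_inner_β_ν.continuousOn.mono fun x hx => S.mem_U_of_mem_frontier hx)
  refine le_trans ?_ (hmin hy)
  have hle := P.defFn_D.fderiv_apply_le_of_le_frameLaplacian (f := fun x => -1 * ⟪S.β x, P.ν x⟫)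
    (a := S.β z) P.isCompact_closure_D P.δ_pos S.le_sum_norm_w_sq S.isOpen_U S.closure_D_subset_U
    (contDiffOn_const.mul S.contDiffOn_inner_β_ν) hC
    (fun x hx => by
      rw [frameLaplacian_const_mul S.isOpen_U S.contDiffOn_inner_β_ν (S.mem_U hx)]
      linarith [(abs_le.1 (hL S x hx)).2])
    hz (fun x hx => by simpa using hmin hx) (by rw [real_inner_comm]; exact S.inner_β_ν_pos hz)
  rw [fderiv_const_mul (differentiableAt_of_contDiffOn_isOpen S.isOpen_U S.contDiffOn_inner_β_ν
    (S.mem_U_of_mem_frontier hz)), smul_apply, smul_eq_mul, real_inner_comm] at hle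
  rw [div_le_iff₀' hK]
  linarith [S.fderiv_inner_β_ν_le hz]

namespace Solution

/-- `M` bounds the Hessian of the Legendre transform in all directions tangential to `∂D`. -/
def IsTangentialBound (S : P.Solution) (M : ℝ) : Prop :=
  ∀ y ∈ frontier P.D, ∀ τ, ⟪P.ν y, τ⟫ = 0 → ⟪τ, S.A y τ⟫ ≤ M * ‖τ‖ ^ 2

lemma inner_A_add_smul_β (S : P.Solution) (hy : y ∈ frontier P.D) {τ : E} (hτ : ⟪P.ν y, τ⟫ = 0)
    (b : ℝ) :
    ⟪τ + b • S.β y, S.A y (τ + b • S.β y)⟫ =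
      ⟪τ, S.A y τ⟫ + b ^ 2 * (‖S.A y (S.β y)‖ * ⟪S.β y, P.ν y⟫) := by
  have hβτ : ⟪S.β y, S.A y τ⟫ = 0 := by
    rw [← S.inner_fderiv_X_comm y (S.mem_U_of_mem_frontier hy), S.A_β_eq hy, inner_smul_left, hτ,
      mul_zero]
  have hτβ : ⟪τ, S.A y (S.β y)⟫ = 0 := by
    rw [S.A_β_eq hy, inner_smul_right, real_inner_comm, hτ, mul_zero]
  rw [← S.inner_A_β_self hy]
  simp only [map_add, map_smul, inner_add_left, inner_add_right, inner_smul_left,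
    inner_smul_right, hβτ, hτβ, conj_trivial]
  ring

/- `a = τ + b β` with `τ` tangential and `b = ⟨ν, a⟩ / ⟨β, ν⟩`. -/
lemma inner_A_le_of_isTangentialBound {χ K M : ℝ} {a : E} (hM : S.IsTangentialBound M)
    (hM₀ : 0 ≤ M) (hy : y ∈ frontier P.D) (hχ : 0 < χ) (hχβ : χ ≤ ⟪S.β y, P.ν y⟫)
    (hK : ‖S.A y (S.β y)‖ ≤ K) (ha : ‖a‖ = 1) :
    ⟪a, S.A y a⟫ ≤ (1 + 1 / χ) ^ 2 * M + K / χ ^ 2 := by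
  have hβν := S.inner_β_ν_pos hy
  set b := ⟪P.ν y, a⟫ / ⟪S.β y, P.ν y⟫ with hb
  set τ := a - b • S.β y with hτ
  have hντ : ⟪P.ν y, τ⟫ = 0 := by
    rw [hτ, inner_sub_right, inner_smul_right, real_inner_comm (S.β y), hb,
      div_mul_cancel₀ _ hβν.ne', sub_self]
  have hb_le : |b| ≤ 1 / χ := by
    have hνa := abs_real_inner_le_norm (P.ν y) a
    rw [P.defFn_D.norm_gradient y hy, ha, mul_one] at hνa
    rw [hb, abs_div, abs_of_pos hβν]
    gcongr
  have hτ_le : ‖τ‖ ≤ 1 + 1 / χ := by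
    refine (norm_sub_le _ _).trans ?_
    rw [norm_smul, S.norm_β hy, ha, mul_one, Real.norm_eq_abs]
    gcongr
  calc ⟪a, S.A y a⟫
      = ⟪τ, S.A y τ⟫ + b ^ 2 * (‖S.A y (S.β y)‖ * ⟪S.β y, P.ν y⟫) := by
        rw [← S.inner_A_add_smul_β hy hντ, hτ, sub_add_cancel]
    _ ≤ M * (1 + 1 / χ) ^ 2 + (1 / χ) ^ 2 * (K * 1) := by
        have hK₀ := (norm_nonneg _).trans hK
        have hb_sq : b ^ 2 ≤ (1 / χ) ^ 2 := sq_le_sq' (abs_le.1 hb_le).1 (abs_le.1 hb_le).2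
        exact add_le_add ((hM y hy τ hντ).trans (by gcongr)) (mul_le_mul hb_sq
          (mul_le_mul hK (S.inner_β_ν_le_one hy) hβν.le hK₀) (by positivity) (by positivity))
    _ = (1 + 1 / χ) ^ 2 * M + K / χ ^ 2 := by ring

end Solution

set_option maxSynthPendingDepth 5 in
lemma exists_neg_le_frameLaplacian_inner_A_const (P : DualProblem ι E) :
    ∃ C, 0 ≤ C ∧ ∀ S : P.Solution, ∀ y ∈ P.D, ∀ a : E, ‖a‖ = 1 →
      -C ≤ frameLaplacian S.w (fun x => ⟪a, S.A x a⟫) y := by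
  obtain ⟨C, hC, hr⟩ := P.exists_norm_jet_r_le
  have := P.Cw_nonneg
  refine ⟨∑ _i : ι, 2 * (C * P.Cw), by positivity, fun S y hy a ha => ?_⟩
  have hyc := subset_closure hy
  simpa using S.neg_le_frameLaplacian_inner_A (ξ := fun _ => a) (Q₁ := 0) (Q₂ := 0)
    contDiff_const hy (fun i => (hr i y hyc).2.1) (fun i => (hr i y hyc).2.2) ha.le (by simp)
    (by simp) le_rfl

lemma exists_norm_A_le_of_isTangentialBound (P : DualProblem ι E) :
    ∃ C, 0 ≤ C ∧ ∀ S : P.Solution, ∀ M, 0 ≤ M → S.IsTangentialBound M →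
      ∀ y ∈ closure P.D, ‖S.A y‖ ≤ C * (1 + M) := by
  obtain ⟨K, hK, hAβ⟩ := P.exists_norm_A_β_le
  obtain ⟨χ, hχ, hβν⟩ := P.exists_le_inner_β_ν
  obtain ⟨C, hC, hL⟩ := P.exists_neg_le_frameLaplacian_inner_A_const
  obtain ⟨H, hH, hh⟩ := exists_norm_le_of_continuousOn P.isCompact_closure_D
    P.defFn_D.contDiff.continuous.continuousOn
  have hθ := P.defFn_D.pos
  have hδ := P.δ_pos
  set B := (C + 1) / (P.θD * P.δ)
  have : 0 ≤ B := by positivity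
  refine ⟨(1 + 1 / χ) ^ 2 + (K / χ ^ 2 + B * H), by positivity, fun S M hM₀ hM y hy => ?_⟩
  refine norm_le_of_inner_apply_self_le (S.inner_fderiv_X_comm y (S.closure_D_subset_U hy))
    (S.inner_A_self_nonneg hy) (by positivity) fun a ha => ?_
  have hA : ContDiffOn ℝ ∞ (fun x => ⟪a, S.A x a⟫) S.U :=
    contDiffOn_const.inner ℝ (S.contDiffOn_A.clm_apply contDiffOn_const)
  calc ⟪a, S.A y a⟫
      ≤ (1 + 1 / χ) ^ 2 * M + K / χ ^ 2 + B * P.h y :=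
        P.defFn_D.le_add_mul_of_le_frameLaplacian P.isCompact_closure_D hδ S.le_sum_norm_w_sq
          (hA.continuousOn.mono S.closure_D_subset_U)
          (hA.mono (subset_closure.trans S.closure_D_subset_U)) hC (fun x hx => hL S x hx a ha)
          (fun x hx => S.inner_A_le_of_isTangentialBound hM hM₀ hx hχ (hβν S x hx) (hAβ S x hx) ha)
          hy
    _ ≤ (1 + 1 / χ) ^ 2 * M + K / χ ^ 2 + B * H := by
        gcongr
        exact (le_abs_self _).trans (hh y hy)
    _ ≤ ((1 + 1 / χ) ^ 2 + (K / χ ^ 2 + B * H)) * (1 + M) := by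
        have h₁ : 0 ≤ (1 + 1 / χ) ^ 2 := by positivity
        have h₂ : 0 ≤ (K / χ ^ 2 + B * H) * M := by positivity
        linarith

end DualProblem

section ClmComp

variable {E F G : Type*} [NormedAddCommGroup E] [NormedSpace ℝ E] [NormedAddCommGroup F]
  [NormedSpace ℝ F] [NormedAddCommGroup G] [NormedSpace ℝ G] {T : E → F}

lemma norm_clm_apply_le_of_norm_le_one {L : F →L[ℝ] G} (hL : ‖L‖ ≤ 1) (v : F) : ‖L v‖ ≤ ‖v‖ :=
  (L.le_of_opNorm_le hL v).trans_eq (one_mul _)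

lemma norm_fderiv_clm_comp_le {L : F →L[ℝ] G} {y : E} (hL : ‖L‖ ≤ 1)
    (hT : DifferentiableAt ℝ T y) : ‖fderiv ℝ (fun x => L (T x)) y‖ ≤ ‖fderiv ℝ T y‖ := by
  have hcomp : fderiv ℝ (fun x => L (T x)) y = L.comp (fderiv ℝ T y) :=
    (L.hasFDerivAt.comp y hT.hasFDerivAt).fderiv
  rw [hcomp]
  exact (L.opNorm_comp_le _).trans (mul_le_of_le_one_left (norm_nonneg _) hL)

lemma norm_fderiv_fderiv_clm_comp_le {L : F →L[ℝ] G} (hL : ‖L‖ ≤ 1) (hT : ContDiff ℝ ∞ T)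
    (y : E) : ‖fderiv ℝ (fderiv ℝ fun x => L (T x)) y‖ ≤ ‖fderiv ℝ (fderiv ℝ T) y‖ := by
  have hT₁ : Differentiable ℝ T := hT.differentiable (by simp)
  have hT₂ : Differentiable ℝ (fderiv ℝ T) :=
    (hT.fderiv_right (m := ∞) (by simp)).differentiable (by simp)
  obtain ⟨LL, hLL, hcomp⟩ : ∃ LL : (E →L[ℝ] F) →L[ℝ] E →L[ℝ] G, ‖LL‖ ≤ 1 ∧
      fderiv ℝ (fun x => L (T x)) = fun x => LL (fderiv ℝ T x) :=
    ⟨ContinuousLinearMap.compL ℝ E F G L,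
      ContinuousLinearMap.opNorm_le_bound _ zero_le_one fun B =>
        (L.opNorm_comp_le _).trans (mul_le_mul_of_nonneg_right hL (norm_nonneg _)),
      funext fun x => (L.hasFDerivAt.comp x (hT₁ x).hasFDerivAt).fderiv⟩
  rw [hcomp]
  exact norm_fderiv_clm_comp_le hLL (hT₂ y)

lemma exists_norm_jet_clm_comp_le {s : Set E} (hs : IsCompact s) (hT : ContDiff ℝ ∞ T) :
    ∃ C, 0 ≤ C ∧ ∀ L : F →L[ℝ] G, ‖L‖ ≤ 1 → ∀ y ∈ s, ‖L (T y)‖ ≤ C ∧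
      ‖fderiv ℝ (fun x => L (T x)) y‖ ≤ C ∧
      ‖fderiv ℝ (fderiv ℝ fun x => L (T x)) y‖ ≤ C := by
  obtain ⟨C, hC, hle⟩ := exists_norm_jet_le hs isOpen_univ (subset_univ s) hT.contDiffOn
  refine ⟨C, hC, fun L hL y hy => ?_⟩
  obtain ⟨h₀, h₁, h₂⟩ := hle y hy
  exact ⟨(norm_clm_apply_le_of_norm_le_one hL _).trans h₀,
    (norm_fderiv_clm_comp_le hL (hT.differentiable (by simp) y)).trans h₁,
    (norm_fderiv_fderiv_clm_comp_le hL hT y).trans h₂⟩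

end ClmComp

lemma neg_le_frameLaplacian_sq {ι E : Type*} [Fintype ι] [NormedAddCommGroup E] [NormedSpace ℝ E]
    {U : Set E} {w : ι → E → E} {f : E → ℝ} {y : E} {Q₀ Q₂ W : ℝ} (hU : IsOpen U)
    (hf : ContDiffOn ℝ ∞ f U) (hy : y ∈ U) (h₀ : ‖f y‖ ≤ Q₀)
    (h₂ : ‖fderiv ℝ (fderiv ℝ f) y‖ ≤ Q₂) (hw : ∀ i, ‖w i y‖ ≤ W) :
    -∑ _i : ι, 2 * (Q₀ * (Q₂ * W * W)) ≤ frameLaplacian w (fun x => f x ^ 2) y := by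
  rw [frameLaplacian_eq_of_hasDerivAt_line
    (F' := fun i t => 2 * (f (y + t • w i y) * fderiv ℝ f (y + t • w i y) (w i y)))
    (q := fun i => 2 * (f y * fderiv ℝ (fderiv ℝ f) y (w i y) (w i y) +
      fderiv ℝ f y (w i y) ^ 2)) hU (hf.pow 2) hy, ← Finset.sum_neg_distrib]
  · refine Finset.sum_le_sum fun i _ => ?_
    have hle : |f y * fderiv ℝ (fderiv ℝ f) y (w i y) (w i y)| ≤ Q₀ * (Q₂ * W * W) := by
      rw [abs_mul]
      exact mul_le_mul h₀ (ContinuousLinearMap.le_of_opNorm₂_le_of_le _ h₂ (hw i) (hw i))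
        (abs_nonneg _) ((norm_nonneg _).trans h₀)
    linarith [(abs_le.1 hle).1, sq_nonneg (fderiv ℝ f y (w i y))]
  · intro i
    filter_upwards [eventually_hasDerivAt_comp_line hU hf hy (w i y)] with t ht
    simpa [mul_assoc] using ht.fun_pow 2
  · intro i
    have hmul := (hasDerivAt_comp_line hU hf hy (w i y)).fun_mul
      (hasDerivAt_fderiv_comp_line hU hf hy (w i y) (w i y))
    refine (hmul.const_mul 2).congr_deriv ?_
    rw [zero_smul, add_zero]
    ring

namespace DualProblem

variable {ι E : Type*} [Fintype ι] [NormedAddCommGroup E] [InnerProductSpace ℝ E]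
  [CompleteSpace E] {P : DualProblem ι E} {S : P.Solution} {y τ : E} {M : ℝ}

/-- The projection along the normal field `ν`; on `∂D`, where `ν` is a unit vector, it is the
orthogonal projection onto the tangent space. -/
def tangentialProj (P : DualProblem ι E) (y : E) : E →L[ℝ] E :=
  ContinuousLinearMap.id ℝ E - (innerSL ℝ (P.ν y)).smulRight (P.ν y)

lemma tangentialProj_apply (P : DualProblem ι E) (y τ : E) :
    P.tangentialProj y τ = τ - ⟪P.ν y, τ⟫ • P.ν y := by
  simp [tangentialProj]

lemma contDiff_tangentialProj (P : DualProblem ι E) : ContDiff ℝ ∞ P.tangentialProj :=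
  contDiff_const.sub (((innerSL ℝ).contDiff.comp P.contDiff_ν).smulRight P.contDiff_ν)

lemma tangentialProj_eq_self (hτ : ⟪P.ν y, τ⟫ = 0) : P.tangentialProj y τ = τ := by
  rw [tangentialProj_apply, hτ, zero_smul, sub_zero]

lemma inner_ν_tangentialProj (hy : y ∈ frontier P.D) (τ : E) :
    ⟪P.ν y, P.tangentialProj y τ⟫ = 0 := by
  rw [tangentialProj_apply, inner_sub_right, inner_smul_right,
    P.defFn_D.inner_gradient_self hy, mul_one, sub_self]

lemma norm_tangentialProj_sq (hy : y ∈ frontier P.D) (τ : E) :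
    ‖P.tangentialProj y τ‖ ^ 2 = ‖τ‖ ^ 2 - ⟪P.ν y, τ⟫ ^ 2 := by
  have hsplit : τ = P.tangentialProj y τ + ⟪P.ν y, τ⟫ • P.ν y := by
    rw [tangentialProj_apply, sub_add_cancel]
  have hpyth := norm_add_sq_real (P.tangentialProj y τ) (⟪P.ν y, τ⟫ • P.ν y)
  rw [← hsplit, inner_smul_right, real_inner_comm (P.ν y) (P.tangentialProj y τ),
    inner_ν_tangentialProj hy, norm_smul, P.defFn_D.norm_gradient y hy, mul_one,
    Real.norm_eq_abs, sq_abs] at hpyth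
  linarith

lemma exists_norm_jet_tangentialProj_le (P : DualProblem ι E) :
    ∃ Q, 0 ≤ Q ∧ ∀ τ, ‖τ‖ = 1 → ∀ y ∈ closure P.D, ‖P.tangentialProj y τ‖ ≤ Q ∧
      ‖fderiv ℝ (fun x => P.tangentialProj x τ) y‖ ≤ Q ∧
      ‖fderiv ℝ (fderiv ℝ fun x => P.tangentialProj x τ) y‖ ≤ Q := by
  obtain ⟨Q, hQ, hle⟩ := exists_norm_jet_clm_comp_le (G := E) P.isCompact_closure_D
    P.contDiff_tangentialProj
  refine ⟨Q, hQ, fun τ hτ => hle (ContinuousLinearMap.apply ℝ E τ) ?_⟩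
  refine ContinuousLinearMap.opNorm_le_bound _ zero_le_one fun T => ?_
  simpa [hτ] using T.le_opNorm τ

lemma contDiff_inner_ν (P : DualProblem ι E) (τ : E) : ContDiff ℝ ∞ fun x => ⟪τ, P.ν x⟫ :=
  contDiff_const.inner ℝ P.contDiff_ν

lemma exists_norm_jet_inner_ν_le (P : DualProblem ι E) :
    ∃ Q, 0 ≤ Q ∧ ∀ τ, ‖τ‖ = 1 → ∀ y ∈ closure P.D, ‖⟪τ, P.ν y⟫‖ ≤ Q ∧
      ‖fderiv ℝ (fun x => ⟪τ, P.ν x⟫) y‖ ≤ Q ∧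
      ‖fderiv ℝ (fderiv ℝ fun x => ⟪τ, P.ν x⟫) y‖ ≤ Q := by
  obtain ⟨Q, hQ, hle⟩ := exists_norm_jet_clm_comp_le (G := ℝ) P.isCompact_closure_D
    P.contDiff_ν
  exact ⟨Q, hQ, fun τ hτ => hle (innerSL ℝ τ) ((innerSL_apply_norm ℝ τ).trans hτ).le⟩

namespace Solution

/-- The quadratic form of the Hessian in the direction of the tangential part of the constant
vector `τ`, corrected so that on `∂D` it is at most `M` whenever `M` is a tangential bound. -/
def tangentialTest (S : P.Solution) (M : ℝ) (τ x : E) : ℝ :=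
  ⟪P.tangentialProj x τ, S.A x (P.tangentialProj x τ)⟫ + M * ⟪τ, P.ν x⟫ ^ 2

lemma contDiffOn_inner_A_tangentialProj (S : P.Solution) (τ : E) :
    ContDiffOn ℝ ∞ (fun x => ⟪P.tangentialProj x τ, S.A x (P.tangentialProj x τ)⟫) S.U := by
  have hξ := (P.contDiff_tangentialProj.clm_apply (contDiff_const (c := τ))).contDiffOn (s := S.U)
  exact hξ.inner ℝ (S.contDiffOn_A.clm_apply hξ)

lemma contDiffOn_tangentialTest (S : P.Solution) (M : ℝ) (τ : E) :
    ContDiffOn ℝ ∞ (S.tangentialTest M τ) S.U :=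
  (S.contDiffOn_inner_A_tangentialProj τ).add
    (contDiffOn_const.mul ((P.contDiff_inner_ν τ).pow 2).contDiffOn)

lemma tangentialTest_eq (hτ : ⟪P.ν y, τ⟫ = 0) : S.tangentialTest M τ y = ⟪τ, S.A y τ⟫ := by
  rw [tangentialTest, tangentialProj_eq_self hτ, real_inner_comm (P.ν y) τ, hτ]
  ring

lemma tangentialTest_le (hM : S.IsTangentialBound M) (hy : y ∈ frontier P.D) (hτ : ‖τ‖ = 1) :
    S.tangentialTest M τ y ≤ M := by
  have hle := hM y hy _ (inner_ν_tangentialProj hy τ)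
  rw [norm_tangentialProj_sq hy, hτ] at hle
  rw [tangentialTest, real_inner_comm (P.ν y) τ]
  linarith

lemma fderiv_tangentialTest_apply (hy : y ∈ S.U) (hτ : ⟪P.ν y, τ⟫ = 0) (b : E) :
    fderiv ℝ (S.tangentialTest M τ) y b =
      ⟪τ, fderiv ℝ S.A y b τ⟫ + 2 * ⟪fderiv ℝ (fun x => P.tangentialProj x τ) y b, S.A y τ⟫ := by
  apply fderiv_apply_eq_of_hasDerivAt_line
    (differentiableAt_of_contDiffOn_isOpen S.isOpen_U (S.contDiffOn_tangentialTest M τ) hy)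
  have hξ := hasDerivAt_comp_line isOpen_univ
    (P.contDiff_tangentialProj.clm_apply (contDiff_const (c := τ))).contDiffOn (mem_univ y) b
  have hA := hasDerivAt_comp_line S.isOpen_U S.contDiffOn_A hy b
  have hν := hasDerivAt_comp_line isOpen_univ (P.contDiff_inner_ν τ).contDiffOn (mem_univ y) b
  refine ((hξ.inner ℝ (hA.clm_apply hξ)).fun_add ((hν.fun_pow 2).const_mul M)).congr_deriv ?_
  have hτν : ⟪τ, P.ν y⟫ = 0 := by rw [real_inner_comm, hτ]
  simp only [zero_smul, add_zero, tangentialProj_eq_self hτ, inner_add_right, hτν]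
  rw [← S.inner_fderiv_X_comm y hy τ, real_inner_comm (fderiv ℝ S.X y τ)]
  simp
  ring

end Solution

lemma exists_neg_le_frameLaplacian_tangentialTest (P : DualProblem ι E) :
    ∃ C, 0 ≤ C ∧ ∀ S : P.Solution, ∀ M, 0 ≤ M → S.IsTangentialBound M → ∀ τ, ‖τ‖ = 1 →
      ∀ y ∈ P.D, -(C * (1 + M)) ≤ frameLaplacian S.w (S.tangentialTest M τ) y := by
  obtain ⟨K, hK, hA⟩ := P.exists_norm_A_le_of_isTangentialBound
  obtain ⟨C, hC, hr⟩ := P.exists_norm_jet_r_le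
  obtain ⟨Q, hQ, hξ⟩ := P.exists_norm_jet_tangentialProj_le
  obtain ⟨N, hN, hν⟩ := P.exists_norm_jet_inner_ν_le
  have := P.Cw_nonneg
  set W := P.Cw
  set C₁ := ∑ _i : ι, (2 * (C * Q * Q * W) + 4 * (C * Q * (Q * W))) with hC₁
  set C₂ := ∑ _i : ι, 2 * (Q * W * W * Q) with hC₂
  set C₃ := ∑ _i : ι, 2 * (N * (N * W * W))
  have : 0 ≤ C₁ := by positivity
  have : 0 ≤ C₂ := by positivity
  have : 0 ≤ C₃ := by positivity
  refine ⟨C₁ + C₂ * K + C₃, by positivity, fun S M hM₀ hM τ hτ y hy => ?_⟩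
  have hyc := subset_closure hy
  obtain ⟨hξ₀, hξ₁, hξ₂⟩ := hξ τ hτ y hyc
  obtain ⟨hν₀, -, hν₂⟩ := hν τ hτ y hyc
  have hform := S.neg_le_frameLaplacian_inner_A
    (P.contDiff_tangentialProj.clm_apply (contDiff_const (c := τ))) hy
    (fun i => (hr i y hyc).2.1) (fun i => (hr i y hyc).2.2) hξ₀ hξ₁ hξ₂ (hA S M hM₀ hM y hyc)
  have hsq := neg_le_frameLaplacian_sq S.isOpen_U (P.contDiff_inner_ν τ).contDiffOn
    (S.mem_U hy) hν₀ hν₂ (S.norm_w_le y hy)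
  have hsum : frameLaplacian S.w (S.tangentialTest M τ) y =
      frameLaplacian S.w (fun x => ⟪P.tangentialProj x τ, S.A x (P.tangentialProj x τ)⟫) y +
        M * frameLaplacian S.w (fun x => ⟪τ, P.ν x⟫ ^ 2) y := by
    have hν := ((P.contDiff_inner_ν τ).pow 2).contDiffOn (s := S.U)
    rw [← frameLaplacian_const_mul S.isOpen_U hν (S.mem_U hy)]
    exact frameLaplacian_add S.isOpen_U (S.contDiffOn_inner_A_tangentialProj τ)
      (contDiffOn_const.mul hν) (S.mem_U hy)
  have hsplit : ∑ _i : ι, (2 * (C * Q * Q * W) + 4 * (C * Q * (Q * W)) +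
      2 * (Q * W * W * (K * (1 + M) * Q))) = C₁ + C₂ * (K * (1 + M)) := by
    rw [hC₁, hC₂, Finset.sum_mul, ← Finset.sum_add_distrib]
    exact Finset.sum_congr rfl fun i _ => by ring
  rw [hsplit] at hform
  rw [hsum]
  have hmul := mul_le_mul_of_nonneg_left hsq hM₀
  have h₁ : 0 ≤ C₁ * M := by positivity
  rw [mul_neg] at hmul
  linarith

end DualProblem

lemma le_one_add_of_mul_sq_le {θ C t : ℝ} (hθ : 0 < θ) (hC : 0 ≤ C)
    (h : θ * t ^ 2 ≤ C * (1 + t)) : t ≤ 1 + 2 * C / θ := by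
  rcases le_total t 1 with ht₁ | ht₁
  · exact ht₁.trans (le_add_of_nonneg_right (by positivity))
  · have hCt : C ≤ C * t := le_mul_of_one_le_right hC ht₁
    have hle : θ * t ≤ 2 * C := le_of_mul_le_mul_right (by linarith) (zero_lt_one.trans_le ht₁)
    linarith [(le_div_iff₀' hθ).2 hle]

namespace DualProblem

variable {ι E : Type*} [Fintype ι] [NormedAddCommGroup E] [InnerProductSpace ℝ E]
  [CompleteSpace E] {P : DualProblem ι E} {S : P.Solution} {y τ : E} {M : ℝ}

lemma exists_inner_fderiv_A_β_le (P : DualProblem ι E) :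
    ∃ C, 0 ≤ C ∧ ∀ S : P.Solution, ∀ M, 0 ≤ M → S.IsTangentialBound M → ∀ y ∈ frontier P.D,
      ∀ τ, ‖τ‖ = 1 → ⟪P.ν y, τ⟫ = 0 → ⟪τ, S.A y τ⟫ = M →
        ⟪τ, fderiv ℝ S.A y (S.β y) τ⟫ ≤ C * (1 + M) := by
  obtain ⟨K, hK, hA⟩ := P.exists_norm_A_le_of_isTangentialBound
  obtain ⟨C, hC, hL⟩ := P.exists_neg_le_frameLaplacian_tangentialTest
  obtain ⟨Q, hQ, hξ⟩ := P.exists_norm_jet_tangentialProj_le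
  have hθδ : 0 < P.θD * P.δ := mul_pos P.defFn_D.pos P.δ_pos
  refine ⟨(C + 1) / (P.θD * P.δ) + 2 * (Q * K), by positivity,
    fun S M hM₀ hM y hy τ hτ hντ hτM => ?_⟩
  have hyc := frontier_subset_closure hy
  have hβ := S.inner_β_ν_pos hy
  have hβ₁ := S.inner_β_ν_le_one hy
  rw [real_inner_comm] at hβ hβ₁
  have hmax : IsMaxOn (S.tangentialTest M τ) (frontier P.D) y := fun x hx =>
    (Solution.tangentialTest_le hM hx hτ).trans_eq
      ((Solution.tangentialTest_eq hντ).trans hτM).symm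
  have hfderiv := P.defFn_D.fderiv_apply_le_of_le_frameLaplacian P.isCompact_closure_D P.δ_pos
    S.le_sum_norm_w_sq S.isOpen_U S.closure_D_subset_U (S.contDiffOn_tangentialTest M τ)
    (by positivity) (hL S M hM₀ hM τ hτ) hy hmax hβ
  have herror : |⟪fderiv ℝ (fun x => P.tangentialProj x τ) y (S.β y), S.A y τ⟫| ≤
      Q * (K * (1 + M)) := by
    have hξ' := (fderiv ℝ (fun x => P.tangentialProj x τ) y).le_of_opNorm_le
      (hξ τ hτ y hyc).2.1 (S.β y)
    have hA' := (S.A y).le_of_opNorm_le (hA S M hM₀ hM y hyc) τ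
    rw [S.norm_β hy, mul_one] at hξ'
    rw [hτ, mul_one] at hA'
    exact (abs_real_inner_le_norm _ _).trans (mul_le_mul hξ' hA' (norm_nonneg _) hQ)
  rw [Solution.fderiv_tangentialTest_apply (S.mem_U_of_mem_frontier hy) hντ] at hfderiv
  have hbarrier : (C * (1 + M) + 1) / (P.θD * P.δ) * ⟪P.ν y, S.β y⟫ ≤
      (C + 1) / (P.θD * P.δ) * (1 + M) := by
    rw [div_mul_eq_mul_div _ _ (1 + M)]
    exact (mul_le_of_le_one_right (by positivity) hβ₁).trans (by gcongr; linarith)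
  linarith [(abs_le.1 herror).1]

lemma exists_mul_norm_A_sq_le (P : DualProblem ι E) :
    ∃ C, 0 ≤ C ∧ ∀ S : P.Solution, ∀ y ∈ frontier P.D, ∀ τ, ‖τ‖ = 1 → ⟪P.ν y, τ⟫ = 0 →
      P.θΩ * ‖S.A y τ‖ ^ 2 ≤ ⟪τ, fderiv ℝ S.A y (S.β y) τ⟫ + C := by
  obtain ⟨K, hK, hAβ⟩ := P.exists_norm_A_β_le
  obtain ⟨H, hH, hh⟩ := exists_norm_jet_le P.isCompact_closure_D isOpen_univ
    (subset_univ (closure P.D)) P.defFn_D.contDiff.contDiffOn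
  refine ⟨K * H, by positivity, fun S y hy τ hτ hντ => ?_⟩
  have hyU := S.mem_U_of_mem_frontier hy
  have hsecond := P.defFn_D.lagrange_second_order S.isOpen_U S.contDiffOn_g_X hyU hy
    (fun x hx => S.g_X_nonneg (subset_closure hx)) (S.g_X_eq_zero hy)
    (fun b => by rw [S.fderiv_g_X_apply hyU, S.A_β_eq hy, inner_smul_left, conj_trivial]) hντ
  have hcomm : ⟪S.β y, fderiv ℝ S.A y τ τ⟫ = ⟪τ, fderiv ℝ S.A y (S.β y) τ⟫ := by
    rw [← inner_fderiv_apply_comm S.isOpen_U S.contDiffOn_A S.inner_fderiv_X_comm hyU,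
      fderiv_fderiv_apply_comm S.isOpen_U S.contDiffOn_X hyU, real_inner_comm]
  have hconcave := P.defFn_Ω.concave (S.X y) (S.A y τ)
  rw [S.fderiv_fderiv_g_X_apply hyU, hcomm, real_inner_comm] at hsecond
  have hD₂h : -H ≤ fderiv ℝ (fderiv ℝ P.h) y τ τ := by
    have := ContinuousLinearMap.le_of_opNorm₂_le_of_le _ (hh y (frontier_subset_closure hy)).2.2
      hτ.le hτ.le
    rw [mul_one, mul_one] at this
    exact (abs_le.1 this).1
  have hmul := mul_le_mul_of_nonneg_left hD₂h (norm_nonneg (S.A y (S.β y)))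
  have := mul_le_mul_of_nonneg_right (hAβ S y hy) hH
  linarith

lemma exists_le_of_isTangentialBound (P : DualProblem ι E) :
    ∃ C, 0 ≤ C ∧ ∀ S : P.Solution, ∀ M, S.IsTangentialBound M → ∀ y ∈ frontier P.D,
      ∀ τ, ‖τ‖ = 1 → ⟪P.ν y, τ⟫ = 0 → ⟪τ, S.A y τ⟫ = M → M ≤ C := by
  obtain ⟨C₁, hC₁, hupper⟩ := P.exists_inner_fderiv_A_β_le
  obtain ⟨C₂, hC₂, hlower⟩ := P.exists_mul_norm_A_sq_le
  have hθ := P.defFn_Ω.pos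
  refine ⟨1 + 2 * (C₁ + C₂) / P.θΩ, by positivity, fun S M hM y hy τ hτ hντ hτM => ?_⟩
  have hM₀ : 0 ≤ M := hτM ▸ S.inner_A_self_nonneg (frontier_subset_closure hy) τ
  have hM_le : M ≤ ‖S.A y τ‖ := by
    simpa [hτ, hτM] using real_inner_le_norm τ (S.A y τ)
  apply le_one_add_of_mul_sq_le hθ (by positivity)
  calc P.θΩ * M ^ 2
      ≤ P.θΩ * ‖S.A y τ‖ ^ 2 := by gcongr
    _ ≤ C₁ * (1 + M) + C₂ :=
        (hlower S y hy τ hτ hντ).trans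
          (add_le_add_left (hupper S M hM₀ hM y hy τ hτ hντ hτM) C₂)
    _ ≤ (C₁ + C₂) * (1 + M) := by linarith [mul_nonneg hC₂ hM₀]

variable (P) in
/-- The unit tangent bundle of `∂D`. -/
def unitTangent : Set (E × E) :=
  (frontier P.D ×ˢ Metric.sphere 0 1) ∩ {z | ⟪P.ν z.1, z.2⟫ = 0}

lemma mem_unitTangent : (y, τ) ∈ P.unitTangent ↔
    y ∈ frontier P.D ∧ ‖τ‖ = 1 ∧ ⟪P.ν y, τ⟫ = 0 := by
  simp [unitTangent, and_assoc]

lemma isCompact_unitTangent [FiniteDimensional ℝ E] (P : DualProblem ι E) :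
    IsCompact P.unitTangent := by
  refine (P.isCompact_frontier_D.prod (isCompact_sphere 0 1)).inter_right
    (isClosed_eq ?_ continuous_const)
  exact (P.contDiff_ν.continuous.comp continuous_fst).inner continuous_snd

namespace Solution

lemma isTangentialBound_of_unitTangent
    (hM : ∀ z ∈ P.unitTangent, ⟪z.2, S.A z.1 z.2⟫ ≤ M) : S.IsTangentialBound M := by
  intro y hy τ hντ
  rcases eq_or_ne τ 0 with rfl | hτ
  · simp
  have : 0 < ‖τ‖ := norm_pos_iff.2 hτ
  have hle := hM (y, ‖τ‖⁻¹ • τ) (mem_unitTangent.2 ⟨hy, norm_smul_inv_norm hτ,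
    by rw [inner_smul_right, hντ, mul_zero]⟩)
  simp only [map_smul, inner_smul_left, inner_smul_right, conj_trivial] at hle
  rwa [← mul_assoc, ← sq, inv_pow, inv_mul_le_iff₀ (by positivity), mul_comm] at hle

lemma continuousOn_inner_A_unitTangent (S : P.Solution) :
    ContinuousOn (fun z : E × E => ⟪z.2, S.A z.1 z.2⟫) P.unitTangent :=
  continuousOn_snd.inner ((S.contDiffOn_A.continuousOn.comp continuousOn_fst
    fun _ hz => S.mem_U_of_mem_frontier hz.1.1).clm_apply continuousOn_snd)

end Solution

lemma exists_isTangentialBound [FiniteDimensional ℝ E] (P : DualProblem ι E) :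
    ∃ M, 0 ≤ M ∧ ∀ S : P.Solution, S.IsTangentialBound M := by
  obtain ⟨C, hC, hle⟩ := P.exists_le_of_isTangentialBound
  refine ⟨C, hC, fun S => Solution.isTangentialBound_of_unitTangent fun z hz => ?_⟩
  obtain ⟨⟨y, τ⟩, hyτ, hmax⟩ :=
    P.isCompact_unitTangent.exists_isMaxOn ⟨z, hz⟩ S.continuousOn_inner_A_unitTangent
  obtain ⟨hy, hτ, hντ⟩ := mem_unitTangent.1 hyτ
  exact (hmax hz).trans (hle S _ (Solution.isTangentialBound_of_unitTangent fun _ hx => hmax hx)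
    y hy τ hτ hντ rfl)

theorem exists_norm_fderiv_X_le [FiniteDimensional ℝ E] (P : DualProblem ι E) :
    ∃ C, 0 < C ∧ ∀ S : P.Solution, ∀ y ∈ closure P.D, ‖fderiv ℝ S.X y‖ ≤ C := by
  obtain ⟨M, hM₀, hM⟩ := P.exists_isTangentialBound
  obtain ⟨C, hC, hle⟩ := P.exists_norm_A_le_of_isTangentialBound
  exact ⟨C * (1 + M) + 1, by positivity, fun S y hy =>
    (hle S M hM₀ (hM S) y hy).trans (le_add_of_nonneg_right zero_le_one)⟩

end DualProblem

section TouchingParaboloid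

variable {E : Type*} [NormedAddCommGroup E] [InnerProductSpace ℝ E]
  {U : Set E} {f : E → ℝ} {x₀ z : E} {ρ G k : ℝ}

lemma fderiv_fderiv_le_of_isLocalMax_sub_paraboloid (hU : IsOpen U) (hf : ContDiffOn ℝ ∞ f U)
    (hz : z ∈ U) (hmax : IsLocalMax (fun x => f x - k / 2 * ‖x - x₀‖ ^ 2) z) (ξ : E) :
    fderiv ℝ (fderiv ℝ f) z ξ ξ ≤ k * ‖ξ‖ ^ 2 := by
  have hF : ContDiffOn ℝ ∞ (fun x => f x - k / 2 * ‖x - x₀‖ ^ 2) U :=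
    hf.sub (contDiff_const.mul ((contDiff_id.sub contDiff_const).norm_sq ℝ)).contDiffOn
  have hsecond := fderiv_fderiv_nonpos_of_isLocalMax hU hF hz hmax ξ
  rw [fderiv_fderiv_apply_eq_of_hasDerivAt_line
    (F' := fun t => fderiv ℝ f (z + t • ξ) ξ - k * ⟪z + t • ξ - x₀, ξ⟫)
    (q := fderiv ℝ (fderiv ℝ f) z ξ ξ - k * ‖ξ‖ ^ 2) hU hF hz] at hsecond
  · linarith
  · filter_upwards [eventually_hasDerivAt_comp_line hU hf hz ξ] with t ht
    refine (ht.fun_sub (((hasDerivAt_add_smul z ξ t).sub_const x₀).norm_sq.const_mul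
      (k / 2))).congr_deriv ?_
    ring
  · have hinner := ((hasDerivAt_add_smul z ξ 0).sub_const x₀).inner ℝ (hasDerivAt_const 0 ξ)
    refine ((hasDerivAt_fderiv_comp_line hU hf hz ξ ξ).fun_sub (hinner.const_mul k)).congr_deriv ?_
    rw [inner_zero_right, zero_add, real_inner_self_eq_norm_sq]

lemma exists_fderiv_fderiv_le_of_norm_gradient_le [ProperSpace E] (hU : IsOpen U)
    (hf : ContDiffOn ℝ ∞ f U) (hρ : 0 < ρ) (hρU : Metric.closedBall x₀ ρ ⊆ U)
    (hG : ∀ x ∈ Metric.closedBall x₀ ρ, ‖gradient f x‖ ≤ G) (hk : G < k / 2 * ρ) :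
    ∃ z ∈ Metric.ball x₀ ρ, ∀ ξ, fderiv ℝ (fderiv ℝ f) z ξ ξ ≤ k * ‖ξ‖ ^ 2 := by
  set F : E → ℝ := fun x => f x - k / 2 * ‖x - x₀‖ ^ 2
  have hx₀ : x₀ ∈ Metric.closedBall x₀ ρ := Metric.mem_closedBall_self hρ.le
  have hFc : ContinuousOn F (Metric.closedBall x₀ ρ) :=
    (hf.continuousOn.mono hρU).sub (by fun_prop)
  have hboundary : ∀ x ∈ Metric.closedBall x₀ ρ \ Metric.ball x₀ ρ, F x < F x₀ := by
    intro x hx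
    rw [Metric.closedBall_sdiff_ball, mem_sphere_iff_norm] at hx
    have hxρ : x ∈ Metric.closedBall x₀ ρ := mem_closedBall_iff_norm.2 hx.le
    have hdiff : |f x - f x₀| ≤ G * ρ := by
      rw [← hx, ← Real.norm_eq_abs]
      refine (convex_closedBall x₀ ρ).norm_image_sub_le_of_norm_fderiv_le
        (fun y hy => differentiableAt_of_contDiffOn_isOpen hU hf (hρU hy)) (fun y hy => ?_) hx₀ hxρ
      rw [← (InnerProductSpace.toDual ℝ E).symm.norm_map]
      exact hG y hy
    have := mul_lt_mul_of_pos_right hk hρ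
    simp only [F, hx, sub_self, norm_zero]
    linarith [(abs_le.1 hdiff).2]
  obtain ⟨z, hz, hmax⟩ := (isCompact_closedBall x₀ ρ).exists_isLocalMax_mem_open
    Metric.ball_subset_closedBall hFc hx₀ hboundary Metric.isOpen_ball
  exact ⟨z, hz, fderiv_fderiv_le_of_isLocalMax_sub_paraboloid hU hf
    (hρU (Metric.ball_subset_closedBall hz)) hmax⟩

end TouchingParaboloid

section PositiveOperators

variable {ι E : Type*} [Fintype ι] [NormedAddCommGroup E] [InnerProductSpace ℝ E]
  {A T : E →L[ℝ] E} {C k : ℝ} {a b : E}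

lemma inner_apply_self_nonneg_of_pos (hpos : ∀ a, a ≠ 0 → 0 < ⟪a, T a⟫) (a : E) :
    0 ≤ ⟪a, T a⟫ := by
  rcases eq_or_ne a 0 with rfl | ha
  · simp
  · exact (hpos a ha).le

lemma abs_inner_apply_le_of_inner_apply_self_le (hsymm : ∀ a b, ⟪T a, b⟫ = ⟪a, T b⟫)
    (hnonneg : ∀ a, 0 ≤ ⟪a, T a⟫) (ha : ⟪a, T a⟫ ≤ C) (hb : ⟪b, T b⟫ ≤ C) : |⟪T a, b⟫| ≤ C := by
  have hsub := hnonneg (a - b)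
  have hadd := hnonneg (a + b)
  have hab := hsymm a b
  simp only [map_sub, map_add, inner_sub_left, inner_sub_right, inner_add_left,
    inner_add_right] at hsub hadd
  rw [← hab, real_inner_comm (T a) b] at hsub hadd
  rw [abs_le]
  constructor <;> linarith

lemma norm_apply_le_of_inner_apply_basis_le (e : OrthonormalBasis ι ℝ E)
    (hsymm : ∀ a b, ⟪T a, b⟫ = ⟪a, T b⟫) (hnonneg : ∀ a, 0 ≤ ⟪a, T a⟫) (ha : ⟪a, T a⟫ ≤ C)
    (he : ∀ i, ⟪e i, T (e i)⟫ ≤ C) : ‖T a‖ ≤ Fintype.card ι * C := by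
  rw [← e.sum_repr' (T a), ← nsmul_eq_mul, ← Finset.card_univ, ← Finset.sum_const]
  refine norm_sum_le_of_le _ fun i _ => ?_
  rw [norm_smul, e.norm_eq_one, mul_one, real_inner_comm]
  exact abs_inner_apply_le_of_inner_apply_self_le hsymm hnonneg ha (he i)

/- Expand `0 ≤ ⟨b, A b⟩` for `b = T a - a / k`. -/
lemma mul_norm_sq_le_inner_of_inner_le (hsymm : ∀ a b, ⟪A a, b⟫ = ⟪a, A b⟫)
    (hnonneg : ∀ a, 0 ≤ ⟪a, A a⟫) (hAT : A (T a) = a) (hk : 0 < k) (ha : ⟪a, A a⟫ ≤ k * ‖a‖ ^ 2) :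
    1 / k * ‖a‖ ^ 2 ≤ ⟪a, T a⟫ := by
  have hb := hnonneg (T a - (1 / k) • a)
  have hcross : ⟪T a, A a⟫ = ‖a‖ ^ 2 := by rw [← hsymm, hAT, real_inner_self_eq_norm_sq]
  simp only [map_sub, map_smul, hAT, inner_sub_left, inner_sub_right, inner_smul_left,
    inner_smul_right, conj_trivial, hcross, real_inner_self_eq_norm_sq,
    real_inner_comm a (T a)] at hb
  have hle : 1 / k * (1 / k * ⟪a, A a⟫) ≤ 1 / k * ‖a‖ ^ 2 := by
    refine mul_le_mul_of_nonneg_left ?_ (by positivity)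
    rw [one_div, inv_mul_le_iff₀ hk]
    exact ha
  linarith

lemma sq_sum_inner_le_sum_norm_sq_mul (v w : ι → E) :
    (∑ i, ⟪v i, w i⟫) ^ 2 ≤ (∑ i, ‖v i‖ ^ 2) * ∑ i, ‖w i‖ ^ 2 := by
  refine le_trans ?_ (Finset.sum_mul_sq_le_sq_mul_sq _ _ _)
  refine sq_le_sq.2 ((Finset.abs_sum_le_sum_abs _ _).trans ((Finset.sum_le_sum fun i _ =>
    abs_real_inner_le_norm (v i) (w i)).trans (le_abs_self _)))

lemma fderiv_apply_fderiv_of_eventually_leftInverse {f g : E → E} {x : E}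
    (hf : DifferentiableAt ℝ f x) (hg : DifferentiableAt ℝ g (f x)) (hgf : ∀ᶠ y in 𝓝 x, g (f y) = y)
    (a : E) : fderiv ℝ g (f x) (fderiv ℝ f x a) = a :=
  congr($((hg.hasFDerivAt.comp x hf.hasFDerivAt).unique
    ((hasFDerivAt_id x).congr_of_eventuallyEq hgf)) a)

end PositiveOperators

section LorentzFrame

variable {E : Type*} [NormedAddCommGroup E]

/-- The Lorentz length `√(1 - |p|²)` of the normal to a spacelike graph with gradient `p`. -/
def spacelikeFactor (p : E) : ℝ := Real.sqrt (1 - ‖p‖ ^ 2)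

lemma one_sub_norm_sq_pos {p : E} (hp : ‖p‖ < 1) : 0 < 1 - ‖p‖ ^ 2 :=
  sub_pos.2 (pow_lt_one₀ (norm_nonneg p) hp two_ne_zero)

lemma spacelikeFactor_pos {p : E} (hp : ‖p‖ < 1) : 0 < spacelikeFactor p :=
  Real.sqrt_pos.2 (one_sub_norm_sq_pos hp)

lemma one_le_inv_sqrt_spacelikeFactor {p : E} (hp : ‖p‖ < 1) :
    1 ≤ (Real.sqrt (spacelikeFactor p))⁻¹ :=
  (one_le_inv₀ (Real.sqrt_pos.2 (spacelikeFactor_pos hp))).2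
    (Real.sqrt_le_one.2 (Real.sqrt_le_one.2 (sub_le_self 1 (sq_nonneg ‖p‖))))

variable [InnerProductSpace ℝ E]

lemma contDiffOn_spacelikeFactor :
    ContDiffOn ℝ ∞ (spacelikeFactor (E := E)) (Metric.ball 0 1) :=
  (contDiff_const.sub (contDiff_id.norm_sq ℝ)).contDiffOn.sqrt fun _ hp =>
    (one_sub_norm_sq_pos (mem_ball_zero_iff.1 hp)).ne'

lemma fderiv_inner_div_spacelikeFactor {V : E → E} {x : E} (hV : DifferentiableAt ℝ V x)
    (hx : ‖V x‖ < 1) (a e : E) :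
    fderiv ℝ (fun y => ⟪V y, e⟫ / spacelikeFactor (V y)) x a =
      (spacelikeFactor (V x))⁻¹ * ⟪e, fderiv ℝ V x a⟫ +
        (spacelikeFactor (V x))⁻¹ ^ 3 * (⟪V x, e⟫ * ⟪V x, fderiv ℝ V x a⟫) := by
  have hsub : 1 - ‖V x‖ ^ 2 ≠ 0 := (one_sub_norm_sq_pos hx).ne'
  have hne : spacelikeFactor (V x) ≠ 0 := (spacelikeFactor_pos hx).ne'
  have hdiff : DifferentiableAt ℝ (fun y => ⟪V y, e⟫ / spacelikeFactor (V y)) x := by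
    simp_rw [div_eq_mul_inv]
    exact (hV.inner ℝ (differentiableAt_const e)).fun_mul
      ((((hV.norm_sq ℝ).const_sub 1).sqrt hsub).fun_inv hne)
  have hline : HasDerivAt (fun t : ℝ => V (x + t • a)) (fderiv ℝ V x a) 0 :=
    hV.hasFDerivAt.hasLineDerivAt a
  have hquot := (hline.inner ℝ (hasDerivAt_const 0 e)).fun_div
    ((hline.norm_sq.const_sub 1).sqrt (by simpa using hsub)) (by simpa using! hne)
  rw [fderiv_apply_eq_of_hasDerivAt_line hdiff hquot]
  simp only [zero_smul, add_zero, inner_zero_right, zero_add]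
  rw [real_inner_comm e]
  change (_ * spacelikeFactor (V x) - _ * (_ / (2 * spacelikeFactor (V x)))) /
    spacelikeFactor (V x) ^ 2 = _
  field_simp
  ring

variable {n : ℕ} {p : EuclideanSpace ℝ (Fin n)}

/-- Vector fields `rᵢ` with `∑ᵢ rᵢ rᵢᵀ = s(p)`, where `s(p)` is the coefficient matrix of the
Lorentz mean curvature operator: `some i` gives the identity part and `none` the rank-one part
`p pᵀ`. -/
def lorentzFrame : Option (Fin n) → EuclideanSpace ℝ (Fin n) → EuclideanSpace ℝ (Fin n)
  | none, p => ((Real.sqrt (spacelikeFactor p))⁻¹ * (spacelikeFactor p)⁻¹) • p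
  | some i, p => (Real.sqrt (spacelikeFactor p))⁻¹ • ev n i

lemma contDiffOn_lorentzFrame (o : Option (Fin n)) :
    ContDiffOn ℝ ∞ (lorentzFrame o) (Metric.ball 0 1) := by
  have hne : ∀ q ∈ Metric.ball (0 : EuclideanSpace ℝ (Fin n)) 1, spacelikeFactor q ≠ 0 :=
    fun q hq => (spacelikeFactor_pos (mem_ball_zero_iff.1 hq)).ne'
  have hsqrt : ContDiffOn ℝ ∞ (fun q : EuclideanSpace ℝ (Fin n) =>
      (Real.sqrt (spacelikeFactor q))⁻¹) (Metric.ball 0 1) :=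
    (contDiffOn_spacelikeFactor.sqrt hne).inv fun q hq =>
      (Real.sqrt_pos.2 (spacelikeFactor_pos (mem_ball_zero_iff.1 hq))).ne'
  cases o with
  | none => exact (hsqrt.mul (contDiffOn_spacelikeFactor.inv hne)).smul contDiffOn_id
  | some i => exact hsqrt.smul contDiffOn_const

lemma exists_norm_lorentzFrame_le {K : Set (EuclideanSpace ℝ (Fin n))} (hK : IsCompact K)
    (hKball : K ⊆ Metric.ball 0 1) :
    ∃ C, 0 ≤ C ∧ ∀ q ∈ K, ∀ o, ‖lorentzFrame o q‖ ≤ C := by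
  obtain ⟨C, hC, hle⟩ := exists_norm_le_of_continuousOn hK (continuousOn_pi.2 fun o =>
    (contDiffOn_lorentzFrame o).continuousOn.mono hKball)
  exact ⟨C, hC, fun q hq o => (norm_le_pi_norm (fun o => lorentzFrame o q) o).trans (hle q hq)⟩

lemma ev_eq_basisFun (i : Fin n) : ev n i = EuclideanSpace.basisFun (Fin n) ℝ i :=
  (EuclideanSpace.basisFun_apply (Fin n) ℝ i).symm

lemma one_le_norm_lorentzFrame_some (hp : ‖p‖ < 1) (i : Fin n) :
    1 ≤ ‖lorentzFrame (some i) p‖ := by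
  rw [lorentzFrame, norm_smul, ev_eq_basisFun, OrthonormalBasis.norm_eq_one, mul_one]
  exact (one_le_inv_sqrt_spacelikeFactor hp).trans (le_abs_self _)

lemma inner_ev_apply_le_inner_lorentzFrame_apply (hp : ‖p‖ < 1)
    {T : EuclideanSpace ℝ (Fin n) →L[ℝ] EuclideanSpace ℝ (Fin n)} (hT : ∀ a, 0 ≤ ⟪a, T a⟫)
    (i : Fin n) :
    ⟪ev n i, T (ev n i)⟫ ≤ ⟪lorentzFrame (some i) p, T (lorentzFrame (some i) p)⟫ := by
  simp only [lorentzFrame, map_smul, inner_smul_left, inner_smul_right, conj_trivial]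
  have hone := one_le_inv_sqrt_spacelikeFactor hp
  rw [← mul_assoc]
  exact le_mul_of_one_le_left (hT _) (one_le_mul_of_one_le_of_one_le hone hone)

lemma sum_inner_lorentzFrame_apply (hp : ‖p‖ < 1)
    (T : EuclideanSpace ℝ (Fin n) →L[ℝ] EuclideanSpace ℝ (Fin n)) :
    ∑ o, ⟪lorentzFrame o p, T (lorentzFrame o p)⟫ =
      ∑ i, ((spacelikeFactor p)⁻¹ * ⟪ev n i, T (ev n i)⟫ +
        (spacelikeFactor p)⁻¹ ^ 3 * (⟪p, ev n i⟫ * ⟪p, T (ev n i)⟫)) := by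
  have hrank : ∑ i, ⟪p, ev n i⟫ * ⟪p, T (ev n i)⟫ = ⟪p, T p⟫ := by
    rw [← T.adjoint_inner_left, ← (EuclideanSpace.basisFun (Fin n) ℝ).sum_inner_mul_inner]
    refine Finset.sum_congr rfl fun i _ => ?_
    rw [ev_eq_basisFun, ← T.adjoint_inner_left, real_inner_comm p, mul_comm]
  have hsq : (Real.sqrt (spacelikeFactor p))⁻¹ ^ 2 = (spacelikeFactor p)⁻¹ := by
    rw [inv_pow, Real.sq_sqrt (spacelikeFactor_pos hp).le]
  simp only [Fintype.sum_option, lorentzFrame, map_smul, inner_smul_left, inner_smul_right,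
    conj_trivial, Finset.sum_add_distrib, ← Finset.mul_sum, hrank, ← hsq]
  ring

lemma MOp_eq_sum_inner_lorentzFrame {U : Set (EuclideanSpace ℝ (Fin n))}
    {u : EuclideanSpace ℝ (Fin n) → ℝ} {x : EuclideanSpace ℝ (Fin n)} (hU : IsOpen U)
    (hu : ContDiffOn ℝ ∞ u U) (hx : x ∈ U) (hspacelike : ‖gradient u x‖ < 1) :
    MOp n u x = ∑ o, ⟪lorentzFrame o (gradient u x),
      fderiv ℝ (gradient u) x (lorentzFrame o (gradient u x))⟫ := by
  rw [sum_inner_lorentzFrame_apply hspacelike]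
  refine Finset.sum_congr rfl fun i _ => ?_
  have hflux : (fun y => fderiv ℝ u y (ev n i) / Real.sqrt (1 - ‖gradient u y‖ ^ 2)) =
      fun y => ⟪gradient u y, ev n i⟫ / spacelikeFactor (gradient u y) :=
    funext fun y => by rw [inner_gradient_left, spacelikeFactor]
  rw [hflux]
  exact fderiv_inner_div_spacelikeFactor
    (differentiableAt_of_contDiffOn_isOpen hU (contDiffOn_gradient hU hu) hx) hspacelike _ _

end LorentzFrame

section SecondBoundaryValueProblem

variable {n : ℕ} {Ω D : Set (EuclideanSpace ℝ (Fin n))} {u ut : EuclideanSpace ℝ (Fin n) → ℝ}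
  {c : ℝ} {x y : EuclideanSpace ℝ (Fin n)}

namespace SmoothOnClosure

lemma differentiableAt_gradient (hu : SmoothOnClosure n Ω u) (hx : x ∈ closure Ω) :
    DifferentiableAt ℝ (gradient u) x :=
  let ⟨_, hU, hΩU, hu⟩ := hu
  differentiableAt_of_contDiffOn_isOpen hU (contDiffOn_gradient hU hu) (hΩU hx)

lemma contDiffOn_gradient (hu : SmoothOnClosure n Ω u) :
    ContDiffOn ℝ ∞ (gradient u) (closure Ω) :=
  let ⟨_, hU, hΩU, hu⟩ := hu
  (_root_.contDiffOn_gradient hU hu).mono hΩU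

lemma contDiffOn_fderiv_gradient (hu : SmoothOnClosure n Ω u) :
    ContDiffOn ℝ ∞ (fderiv ℝ (gradient u)) (closure Ω) :=
  let ⟨_, hU, hΩU, hu⟩ := hu
  (contDiffOn_fderiv hU (_root_.contDiffOn_gradient hU hu)).mono hΩU

lemma inner_fderiv_gradient_comm (hu : SmoothOnClosure n Ω u) (hx : x ∈ closure Ω)
    (a b : EuclideanSpace ℝ (Fin n)) :
    ⟪fderiv ℝ (gradient u) x a, b⟫ = ⟪a, fderiv ℝ (gradient u) x b⟫ :=
  let ⟨_, hU, hΩU, hu⟩ := hu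
  _root_.inner_fderiv_gradient_comm hU hu (hΩU hx) a b

lemma exists_inner_fderiv_gradient_le {x₀ : EuclideanSpace ℝ (Fin n)} {ρ G k : ℝ}
    (hu : SmoothOnClosure n Ω u) (hρ : 0 < ρ) (hρΩ : Metric.closedBall x₀ ρ ⊆ Ω)
    (hG : ∀ x ∈ Ω, ‖gradient u x‖ ≤ G) (hk : G < k / 2 * ρ) :
    ∃ z ∈ Ω, ∀ ξ, ⟪ξ, fderiv ℝ (gradient u) z ξ⟫ ≤ k * ‖ξ‖ ^ 2 := by
  obtain ⟨U, hU, hΩU, hu⟩ := hu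
  obtain ⟨z, hz, hle⟩ := exists_fderiv_fderiv_le_of_norm_gradient_le hU hu hρ
    (hρΩ.trans (subset_closure.trans hΩU)) (fun x hx => hG x (hρΩ hx)) hk
  have hzΩ : z ∈ Ω := hρΩ (Metric.ball_subset_closedBall hz)
  refine ⟨z, hzΩ, fun ξ => ?_⟩
  rw [← _root_.inner_fderiv_gradient_comm hU hu (hΩU (subset_closure hzΩ)),
    inner_fderiv_gradient hU hu (hΩU (subset_closure hzΩ))]
  exact hle ξ

end SmoothOnClosure

namespace IsSol

lemma inner_fderiv_gradient_nonneg (hs : IsSol n Ω D u c) (hx : x ∈ closure Ω)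
    (a : EuclideanSpace ℝ (Fin n)) : 0 ≤ ⟪a, fderiv ℝ (gradient u) x a⟫ :=
  inner_apply_self_nonneg_of_pos (hs.2.2.1 x hx) a

lemma sum_inner_lorentzFrame_eq (hs : IsSol n Ω D u c) (hx : x ∈ Ω) :
    ∑ o, ⟪lorentzFrame o (gradient u x),
      fderiv ℝ (gradient u) x (lorentzFrame o (gradient u x))⟫ = c := by
  obtain ⟨⟨U, hU, hΩU, hu⟩, hspacelike, -, -, heq⟩ := hs
  rw [← heq x hx, MOp_eq_sum_inner_lorentzFrame hU hu (hΩU (subset_closure hx))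
    (hspacelike x (subset_closure hx))]

lemma inner_lorentzFrame_le (hs : IsSol n Ω D u c) (hx : x ∈ Ω) (o : Option (Fin n)) :
    ⟪lorentzFrame o (gradient u x),
      fderiv ℝ (gradient u) x (lorentzFrame o (gradient u x))⟫ ≤ c := by
  rw [← hs.sum_inner_lorentzFrame_eq hx]
  exact Finset.single_le_sum (f := fun o => ⟪lorentzFrame o (gradient u x),
    fderiv ℝ (gradient u) x (lorentzFrame o (gradient u x))⟫)
    (fun o _ => hs.inner_fderiv_gradient_nonneg (subset_closure hx) _) (Finset.mem_univ o)

lemma norm_fderiv_gradient_lorentzFrame_le (hs : IsSol n Ω D u c) (hx : x ∈ Ω)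
    (o : Option (Fin n)) :
    ‖fderiv ℝ (gradient u) x (lorentzFrame o (gradient u x))‖ ≤ n * c := by
  have hnonneg := hs.inner_fderiv_gradient_nonneg (subset_closure hx)
  have hle := norm_apply_le_of_inner_apply_basis_le (EuclideanSpace.basisFun (Fin n) ℝ)
    (hs.1.inner_fderiv_gradient_comm (subset_closure hx)) hnonneg (hs.inner_lorentzFrame_le hx o)
    fun i => by
      rw [← ev_eq_basisFun]
      exact (inner_ev_apply_le_inner_lorentzFrame_apply (hs.2.1 x (subset_closure hx)) hnonneg
        i).trans (hs.inner_lorentzFrame_le hx (some i))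
  rwa [Fintype.card_fin] at hle

end IsSol

lemma exists_mean_curvature_le (hΩ : IsOpen Ω) (hne : Ω.Nonempty) (hD : IsCompact (closure D))
    (hball : closure D ⊆ Metric.ball 0 1) :
    ∃ c₂, 0 ≤ c₂ ∧ ∀ u c, IsSol n Ω D u c → c ≤ c₂ := by
  obtain ⟨x₀, hx₀⟩ := hne
  obtain ⟨ρ, hρ, hρΩ⟩ := Metric.nhds_basis_closedBall.mem_iff.1 (hΩ.mem_nhds hx₀)
  obtain ⟨Cr, -, hr⟩ := exists_norm_lorentzFrame_le hD hball
  refine ⟨∑ _o : Option (Fin n), 4 / ρ * Cr ^ 2, by positivity, fun u c hs => ?_⟩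
  obtain ⟨z, hz, hle⟩ := hs.1.exists_inner_fderiv_gradient_le hρ hρΩ
    (fun x hx => (hs.2.1 x (subset_closure hx)).le)
    (show 1 < 4 / ρ / 2 * ρ by field_simp; norm_num)
  rw [← hs.sum_inner_lorentzFrame_eq hz]
  refine Finset.sum_le_sum fun o _ => (hle _).trans ?_
  have := hr _ (subset_closure (hs.2.2.2.1.mapsTo hz)) o
  gcongr

namespace IsLegendre

lemma gradient_mem (hl : IsLegendre n Ω D u ut) (hs : IsSol n Ω D u c) (hy : y ∈ D) :
    gradient ut y ∈ Ω := by
  obtain ⟨x, hx, rfl⟩ := hs.2.2.2.1.surjOn hy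
  rwa [hl.2.2 x hx]

lemma gradient_mem_closure (hl : IsLegendre n Ω D u ut) (hs : IsSol n Ω D u c)
    (hy : y ∈ closure D) : gradient ut y ∈ closure Ω :=
  closure_mono (image_subset_iff.2 fun _ hz => hl.gradient_mem hs hz)
    (hl.1.contDiffOn_gradient.continuousOn.image_closure ⟨y, hy, rfl⟩)

lemma gradient_gradient (hl : IsLegendre n Ω D u ut) (hs : IsSol n Ω D u c) (hy : y ∈ D) :
    gradient u (gradient ut y) = y := by
  obtain ⟨x, hx, rfl⟩ := hs.2.2.2.1.surjOn hy
  rw [hl.2.2 x hx]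

lemma gradient_gradient_of_mem_closure (hl : IsLegendre n Ω D u ut) (hs : IsSol n Ω D u c)
    (hy : y ∈ closure D) : gradient u (gradient ut y) = y :=
  EqOn.of_subset_closure (f := fun y => gradient u (gradient ut y)) (g := id)
    (fun _ hy => hl.gradient_gradient hs hy)
    (hs.1.contDiffOn_gradient.continuousOn.comp hl.1.contDiffOn_gradient.continuousOn
      fun _ hy => hl.gradient_mem_closure hs hy)
    continuousOn_id subset_closure subset_rfl hy

lemma gradient_mem_frontier (hl : IsLegendre n Ω D u ut) (hs : IsSol n Ω D u c) (hΩ : IsOpen Ω)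
    (hD : IsOpen D) (hy : y ∈ frontier D) : gradient ut y ∈ frontier Ω := by
  rw [hD.frontier_eq] at hy
  rw [hΩ.frontier_eq]
  refine ⟨hl.gradient_mem_closure hs hy.1, fun hx => hy.2 ?_⟩
  rw [← hl.gradient_gradient_of_mem_closure hs hy.1]
  exact hs.2.2.2.1.mapsTo hx

lemma fderiv_gradient_apply_fderiv_gradient (hl : IsLegendre n Ω D u ut) (hs : IsSol n Ω D u c)
    (hΩ : IsOpen Ω) (hy : y ∈ D) (a : EuclideanSpace ℝ (Fin n)) :
    fderiv ℝ (gradient ut) y (fderiv ℝ (gradient u) (gradient ut y) a) = a := by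
  have hx := hl.gradient_mem hs hy
  have hinv := fderiv_apply_fderiv_of_eventually_leftInverse (g := gradient ut)
    (hs.1.differentiableAt_gradient (subset_closure hx))
    (by rw [hl.gradient_gradient hs hy]; exact hl.1.differentiableAt_gradient (subset_closure hy))
    (eventually_of_mem (hΩ.mem_nhds hx) hl.2.2) a
  rwa [hl.gradient_gradient hs hy] at hinv

lemma fderiv_gradient_gradient_apply (hl : IsLegendre n Ω D u ut) (hs : IsSol n Ω D u c)
    (hD : IsOpen D) (hy : y ∈ closure D) (a : EuclideanSpace ℝ (Fin n)) :
    fderiv ℝ (gradient u) (gradient ut y) (fderiv ℝ (gradient ut) y a) = a := by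
  have hinv : EqOn
      (fun y => fderiv ℝ (gradient u) (gradient ut y) (fderiv ℝ (gradient ut) y a))
      (fun _ => a) D := fun z hz =>
    fderiv_apply_fderiv_of_eventually_leftInverse
      (hl.1.differentiableAt_gradient (subset_closure hz))
      (hs.1.differentiableAt_gradient (subset_closure (hl.gradient_mem hs hz)))
      (eventually_of_mem (hD.mem_nhds hz) fun _ hx => hl.gradient_gradient hs hx) a
  refine hinv.of_subset_closure ?_ continuousOn_const subset_closure subset_rfl hy
  exact (hs.1.contDiffOn_fderiv_gradient.continuousOn.comp hl.1.contDiffOn_gradient.continuousOn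
    fun _ hz => hl.gradient_mem_closure hs hz).clm_apply
      (hl.1.contDiffOn_fderiv_gradient.continuousOn.clm_apply continuousOn_const)

lemma inner_fderiv_gradient_pos (hl : IsLegendre n Ω D u ut) (hs : IsSol n Ω D u c)
    (hD : IsOpen D) (hy : y ∈ closure D) {a : EuclideanSpace ℝ (Fin n)} (ha : a ≠ 0) :
    0 < ⟪a, fderiv ℝ (gradient ut) y a⟫ := by
  have hinv := hl.fderiv_gradient_gradient_apply hs hD hy a
  have hne : fderiv ℝ (gradient ut) y a ≠ 0 := fun h => ha (by rw [← hinv, h, map_zero])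
  have hpos := hs.2.2.1 _ (hl.gradient_mem_closure hs hy) _ hne
  rwa [hinv, real_inner_comm] at hpos

lemma sum_inner_lorentzFrame_eq (hl : IsLegendre n Ω D u ut) (hs : IsSol n Ω D u c) (hy : y ∈ D) :
    ∑ o, ⟪lorentzFrame o y, fderiv ℝ (gradient u) (gradient ut y) (lorentzFrame o y)⟫ = c := by
  simpa only [hl.gradient_gradient hs hy] using
    hs.sum_inner_lorentzFrame_eq (hl.gradient_mem hs hy)

lemma le_of_inner_fderiv_gradient_le [NeZero n] {k : ℝ} (hl : IsLegendre n Ω D u ut)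
    (hs : IsSol n Ω D u c) (hΩ : IsOpen Ω) (hD : IsOpen D) (hy : y ∈ D) (hk : 0 < k)
    (hle : ∀ a, ⟪a, fderiv ℝ (gradient ut) y a⟫ ≤ k * ‖a‖ ^ 2) : 1 / k ≤ c := by
  have hx := hl.gradient_mem hs hy
  have hinner := mul_norm_sq_le_inner_of_inner_le
    (hl.1.inner_fderiv_gradient_comm (subset_closure hy))
    (inner_apply_self_nonneg_of_pos fun a => hl.inner_fderiv_gradient_pos hs hD (subset_closure hy))
    (hl.fderiv_gradient_apply_fderiv_gradient hs hΩ hy (lorentzFrame (some 0) y)) hk (hle _)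
  have hc := hs.inner_lorentzFrame_le hx (some 0)
  have hnorm := hs.2.1 _ (subset_closure hx)
  rw [hl.gradient_gradient hs hy] at hc hnorm
  exact (le_mul_of_one_le_right (by positivity)
    (one_le_pow₀ (one_le_norm_lorentzFrame_some hnorm 0))).trans (hinner.trans hc)

end IsLegendre

lemma exists_le_mean_curvature [NeZero n] (hΩ : IsOpen Ω) (hΩc : IsCompact (closure Ω))
    (hD : IsOpen D) (hne : D.Nonempty) :
    ∃ c₁, 0 < c₁ ∧ ∀ u ut c, IsSol n Ω D u c → IsLegendre n Ω D u ut → c₁ ≤ c := by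
  obtain ⟨y₀, hy₀⟩ := hne
  obtain ⟨ρ, hρ, hρD⟩ := Metric.nhds_basis_closedBall.mem_iff.1 (hD.mem_nhds hy₀)
  obtain ⟨G, hG, hGle⟩ := exists_norm_le_of_continuousOn hΩc continuousOn_id
  have hk : 0 < 2 * (G + 1) / ρ := by positivity
  refine ⟨1 / (2 * (G + 1) / ρ), by positivity, fun u ut c hs hl => ?_⟩
  obtain ⟨z, hz, hle⟩ := hl.1.exists_inner_fderiv_gradient_le hρ hρD
    (fun y hy => hGle _ (subset_closure (hl.gradient_mem hs hy)))
    (show G < 2 * (G + 1) / ρ / 2 * ρ by field_simp; linarith)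
  exact hl.le_of_inner_fderiv_gradient_le hs hΩ hD hz hk hle

lemma exists_le_sum_norm_fderiv_gradient_lorentzFrame_sq [NeZero n] (hΩ : IsOpen Ω)
    (hΩc : IsCompact (closure Ω)) (hD : IsOpen D) (hne : D.Nonempty) (hDc : IsCompact (closure D))
    (hball : closure D ⊆ Metric.ball 0 1) :
    ∃ δ, 0 < δ ∧ ∀ u ut c, IsSol n Ω D u c → IsLegendre n Ω D u ut → ∀ y ∈ D,
      δ ≤ ∑ o, ‖fderiv ℝ (gradient u) (gradient ut y) (lorentzFrame o y)‖ ^ 2 := by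
  obtain ⟨c₁, hc₁, hle⟩ := exists_le_mean_curvature hΩ hΩc hD hne
  obtain ⟨Cr, -, hr⟩ := exists_norm_lorentzFrame_le hDc hball
  set Q : ℝ := ∑ _o : Option (Fin n), Cr ^ 2
  have : 0 ≤ Q := by positivity
  refine ⟨c₁ ^ 2 / (Q + 1), by positivity, fun u ut c hs hl y hy => ?_⟩
  set w := fun o => fderiv ℝ (gradient u) (gradient ut y) (lorentzFrame o y)
  rw [div_le_iff₀ (by positivity), mul_comm]
  calc c₁ ^ 2 ≤ c ^ 2 := pow_le_pow_left₀ hc₁.le (hle u ut c hs hl) 2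
    _ = (∑ o, ⟪lorentzFrame o y, w o⟫) ^ 2 := by rw [hl.sum_inner_lorentzFrame_eq hs hy]
    _ ≤ (∑ o, ‖lorentzFrame o y‖ ^ 2) * ∑ o, ‖w o‖ ^ 2 := sq_sum_inner_le_sum_norm_sq_mul _ w
    _ ≤ (Q + 1) * ∑ o, ‖w o‖ ^ 2 := by
      have hrQ : ∑ o, ‖lorentzFrame o y‖ ^ 2 ≤ Q := Finset.sum_le_sum fun o _ =>
        pow_le_pow_left₀ (norm_nonneg _) (hr y (subset_closure hy) o) 2
      gcongr
      linarith

/-- The dual problem attached to the second boundary value problem for the Lorentz mean curvature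
operator on `(Ω, D)`. -/
def lorentzDualProblem {h g : EuclideanSpace ℝ (Fin n) → ℝ} {θD θΩ Cw δ : ℝ}
    (hD : IsUniformlyConcaveDefFn D h θD) (hΩ : IsUniformlyConcaveDefFn Ω g θΩ)
    (hDc : IsCompact (closure D)) (hΩc : IsCompact (closure Ω))
    (hball : closure D ⊆ Metric.ball 0 1) (hCw : 0 ≤ Cw) (hδ : 0 < δ) :
    DualProblem (Option (Fin n)) (EuclideanSpace ℝ (Fin n)) where
  D := D
  Ω := Ω
  h := h
  g := g
  θD := θD
  θΩ := θΩ
  R := Metric.ball 0 1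
  r := lorentzFrame
  Cw := Cw
  δ := δ
  defFn_D := hD
  defFn_Ω := hΩ
  isCompact_closure_D := hDc
  isCompact_closure_Ω := hΩc
  isOpen_R := Metric.isOpen_ball
  closure_D_subset_R := hball
  contDiffOn_r := contDiffOn_lorentzFrame
  Cw_nonneg := hCw
  δ_pos := hδ

lemma IsLegendre.exists_solution {h g : EuclideanSpace ℝ (Fin n) → ℝ} {θD θΩ Cw δ : ℝ}
    (hl : IsLegendre n Ω D u ut) (hs : IsSol n Ω D u c) (hD : IsUniformlyConcaveDefFn D h θD)
    (hΩ : IsUniformlyConcaveDefFn Ω g θΩ) (hDc : IsCompact (closure D))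
    (hΩc : IsCompact (closure Ω)) (hball : closure D ⊆ Metric.ball 0 1) (hCw : 0 ≤ Cw)
    (hδ : 0 < δ) (hcCw : n * c ≤ Cw)
    (hw : ∀ y ∈ D, δ ≤ ∑ o, ‖fderiv ℝ (gradient u) (gradient ut y) (lorentzFrame o y)‖ ^ 2) :
    ∃ S : (lorentzDualProblem hD hΩ hDc hΩc hball hCw hδ).Solution, S.X = gradient ut := by
  obtain ⟨U, hU, hDU, hut⟩ := hl.1
  exact ⟨{
    U := U
    X := gradient ut
    w := fun o y => fderiv ℝ (gradient u) (gradient ut y) (lorentzFrame o y)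
    c := c
    isOpen_U := hU
    closure_D_subset_U := hDU
    contDiffOn_X := contDiffOn_gradient hU hut
    inner_fderiv_X_comm := fun _ hy => inner_fderiv_gradient_comm hU hut hy
    inner_fderiv_X_pos := fun _ hy _ => hl.inner_fderiv_gradient_pos hs hD.isOpen hy
    contDiffOn_w := fun o => (hs.1.contDiffOn_fderiv_gradient.comp
      (hl.1.contDiffOn_gradient.mono subset_closure)
      fun _ hy => subset_closure (hl.gradient_mem hs hy)).clm_apply
        ((contDiffOn_lorentzFrame o).mono (subset_closure.trans hball))
    fderiv_X_w := fun _ hy _ => hl.fderiv_gradient_apply_fderiv_gradient hs hΩ.isOpen hy _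
    sum_inner_r_w := fun _ hy => hl.sum_inner_lorentzFrame_eq hs hy
    norm_w_le := fun y hy o => by
      have hle := hs.norm_fderiv_gradient_lorentzFrame_le (hl.gradient_mem hs hy) o
      rw [hl.gradient_gradient hs hy] at hle
      exact hle.trans hcCw
    le_sum_norm_w_sq := hw
    X_mem := fun _ hy => hl.gradient_mem hs hy
    X_mem_frontier := fun _ hy => hl.gradient_mem_frontier hs hΩ.isOpen hD.isOpen hy }, rfl⟩

lemma IsUnifConvexDefFn.isUniformlyConcaveDefFn {h : EuclideanSpace ℝ (Fin n) → ℝ} {θ : ℝ}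
    (hD : IsUnifConvexDefFn n D h θ) : IsUniformlyConcaveDefFn D h θ :=
  ⟨hD.1, hD.2.1, hD.2.2.1, hD.2.2.2.1, hD.2.2.2.2⟩

end SecondBoundaryValueProblem

/-- Lemma 4.7.  Global bound `‖D²ũ‖ ≤ C₃₆` on the closure of `Ω̃` for the
Legendre transform of any strictly convex solution. -/
theorem statement15 (n : ℕ) (hn : 2 ≤ n) (Ω Ω' : Set (EuclideanSpace ℝ (Fin n)))
    (g h : EuclideanSpace ℝ (Fin n) → ℝ) (θ₁ θ₂ : ℝ)
    (hΩb : Bornology.IsBounded Ω) (hΩ'b : Bornology.IsBounded Ω')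
    (hΩ : IsUnifConvexDefFn n Ω g θ₁) (hΩ' : IsUnifConvexDefFn n Ω' h θ₂)
    (hsub : closure Ω' ⊆ Metric.ball (0 : EuclideanSpace ℝ (Fin n)) 1) :
    ∃ C₃₆ : ℝ, 0 < C₃₆ ∧
      ∀ (u ut : EuclideanSpace ℝ (Fin n) → ℝ) (c : ℝ),
        IsSol n Ω Ω' u c → IsLegendre n Ω Ω' u ut →
        ∀ y ∈ closure Ω', ‖fderiv ℝ (gradient ut) y‖ ≤ C₃₆ := by
  rcases Ω'.eq_empty_or_nonempty with rfl | hne'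
  · exact ⟨1, one_pos, by simp⟩
  rcases Ω.eq_empty_or_nonempty with rfl | hne
  · exact ⟨1, one_pos, fun u ut c hs => absurd hs.2.2.2.1.surjOn (by simp [hne'.ne_empty])⟩
  have : NeZero n := ⟨by omega⟩
  have hgΩ := hΩ.isUniformlyConcaveDefFn
  have hhΩ' := hΩ'.isUniformlyConcaveDefFn
  have hc := hΩb.isCompact_closure
  have hc' := hΩ'b.isCompact_closure
  obtain ⟨c₂, hc₂, hcle⟩ := exists_mean_curvature_le hgΩ.isOpen hne hc' hsub
  obtain ⟨δ, hδ, hw⟩ :=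
    exists_le_sum_norm_fderiv_gradient_lorentzFrame_sq hgΩ.isOpen hc hhΩ'.isOpen hne' hc' hsub
  have hCw : 0 ≤ n * c₂ := by positivity
  obtain ⟨C, hC, hle⟩ :=
    (lorentzDualProblem hhΩ' hgΩ hc' hc hsub hCw hδ).exists_norm_fderiv_X_le
  refine ⟨C, hC, fun u ut c hs hl y hy => ?_⟩
  obtain ⟨S, hS⟩ := hl.exists_solution hs hhΩ' hgΩ hc' hc hsub hCw hδ
    (by have := hcle u c hs; gcongr) (hw u ut c hs hl)
  exact hS ▸ hle S y hy
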